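/- Let f : ℝ → ℝ be a smooth function such that f' is surjective and nowhere flat. Then for every A ∈ SL(2,ℝ) and every α > 0 for which the first row of A satisfies (A₁₁, A₁₂) = r·(cos α, sin α) for some r > 0, there exists a nonconstant smooth 2π-periodic function u : ℝ → ℝ with Φ_{f'∘u}(2π) = A and θ_{f'∘u}(2π) = α. -/

import Mathlib

open Real Set Matrix

/-- A smooth function is nowhere flat if some derivative of order `r' ≤ r` (for a
uniform `r`) is nonzero at every point. -/
def NowhereFlat (g : ℝ → ℝ) : Prop :=
  ∃ r : ℕ, 0 < r ∧ ∀ x : ℝ, ∃ r' : ℕ, 0 < r' ∧ r' ≤ r ∧ iteratedDeriv r' g x ≠ 0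

/-- `Φ` is the fundamental matrix of the potential `q`: `Φ(0) = I` and
`Φ' = [[0,1],[q,0]]·Φ`. -/
def IsFundMatrix (q : ℝ → ℝ) (Φ : ℝ → Matrix (Fin 2) (Fin 2) ℝ) : Prop :=
  Φ 0 = 1 ∧
    ∀ t : ℝ, ∀ i j, HasDerivAt (fun s => Φ s i j) ((!![0, 1; q t, 0] * Φ t) i j) t

/-- `θ` is the continuous argument lift on `[0,2π]` of the first row of `Φ`. -/
def IsArgLift (Φ : ℝ → Matrix (Fin 2) (Fin 2) ℝ) (θ : ℝ → ℝ) : Prop :=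
  ContinuousOn θ (Icc 0 (2 * π)) ∧ θ 0 = 0 ∧
    ∀ t ∈ Icc (0:ℝ) (2 * π),
      Φ t 0 0 = Real.sqrt ((Φ t 0 0) ^ 2 + (Φ t 0 1) ^ 2) * Real.cos (θ t) ∧
      Φ t 0 1 = Real.sqrt ((Φ t 0 0) ^ 2 + (Φ t 0 1) ^ 2) * Real.sin (θ t)

/-!
Solutions `v` of `v'' = q v` in the plane `ℂ` with Wronskian `det (v, v') = 1` are, up to the choice
of the polar angle `θ`, arbitrary increasing functions: the modulus is `1 / √θ'`. Gluing the angle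
of the unit circle near `0` to the angle of a solution of the constant equation `v'' = g(c₀) v` with
the prescribed phase at time `T` therefore gives a curve with the desired monodromy and winding,
and with constant potential `g(c₀)` on a final interval `[b, T]`, where `g'(c₀) ≠ 0`.

The potential of this curve need not lift through `g`. Solutions depend continuously on the
potential even in the `L¹` norm, however, and in that norm every continuous function is a limit of
functions `g ∘ u` with `u` smooth and equal to `c₀` near the ends of the interval. Doing this on
`[0, b]` leaves a small error in the phase at time `b`. It is removed on `[b, T]` by a potential
uniformly close to `g(c₀)`, found by bending the curve itself; this potential lifts through the
local inverse of `g` at `c₀`. The resulting curve stays uniformly close to the first one, so its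
winding is the prescribed one.
-/

open Filter MeasureTheory
open scoped Topology ContDiff BoundedContinuousFunction
section LinearODE

variable {E : Type*} [NormedAddCommGroup E] [NormedSpace ℝ E] {A B : ℝ → E →L[ℝ] E} {X Y : ℝ → E}

/-- The weight of the norm in which the Picard operator of `x' = A x` based at `t₀` contracts by the
factor `1/2` on the whole line. Using `cosh` rather than `exp` treats both time directions at
once. -/
noncomputable def picardWeight (A : ℝ → E →L[ℝ] E) (t₀ t : ℝ) : ℝ :=
  cosh (2 * ∫ s in t₀..t, ‖A s‖)

lemma picardWeight_pos (A : ℝ → E →L[ℝ] E) (t₀ t : ℝ) : 0 < picardWeight A t₀ t := cosh_pos _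

lemma hasDerivAt_integral_norm (hA : Continuous A) (t₀ t : ℝ) :
    HasDerivAt (fun t => ∫ s in t₀..t, ‖A s‖) ‖A t‖ t :=
  (hA.norm.integral_hasStrictDerivAt t₀ t).hasDerivAt

lemma continuous_picardWeight (hA : Continuous A) (t₀ : ℝ) : Continuous (picardWeight A t₀) :=
  continuous_cosh.comp <| continuous_const.mul <|
    continuous_iff_continuousAt.2 fun t => (hasDerivAt_integral_norm hA t₀ t).continuousAt

lemma integral_norm_mul_picardWeight (hA : Continuous A) (t₀ t : ℝ) :
    ∫ s in t₀..t, ‖A s‖ * picardWeight A t₀ s = sinh (2 * ∫ s in t₀..t, ‖A s‖) / 2 := by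
  have hderiv (s : ℝ) : HasDerivAt (fun t => sinh (2 * ∫ s in t₀..t, ‖A s‖) / 2)
      (‖A s‖ * picardWeight A t₀ s) s :=
    (((hasDerivAt_integral_norm hA t₀ s).const_mul 2).sinh.div_const 2).congr_deriv <| by
      rw [picardWeight]; ring
  rw [intervalIntegral.integral_eq_sub_of_hasDerivAt (fun s _ => hderiv s)
    ((hA.norm.mul (continuous_picardWeight hA t₀)).intervalIntegrable _ _)]
  simp

lemma norm_integral_picardWeight_smul_le (hA : Continuous A) {C : ℝ} (hY : ∀ s, ‖Y s‖ ≤ C)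
    (t₀ t : ℝ) :
    ‖∫ s in t₀..t, picardWeight A t₀ s • A s (Y s)‖ ≤ C / 2 * picardWeight A t₀ t := by
  have hC : 0 ≤ C := (norm_nonneg _).trans (hY 0)
  have hpoint (s : ℝ) :
      ‖picardWeight A t₀ s • A s (Y s)‖ ≤ C * (‖A s‖ * picardWeight A t₀ s) := by
    rw [norm_smul, norm_of_nonneg (picardWeight_pos A t₀ s).le]
    calc picardWeight A t₀ s * ‖A s (Y s)‖
        ≤ picardWeight A t₀ s * (‖A s‖ * C) := by
          gcongr
          · exact (picardWeight_pos A t₀ s).le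
          · exact (A s).le_opNorm_of_le (hY s)
      _ = C * (‖A s‖ * picardWeight A t₀ s) := by ring
  calc ‖∫ s in t₀..t, picardWeight A t₀ s • A s (Y s)‖
      ≤ |∫ s in t₀..t, C * (‖A s‖ * picardWeight A t₀ s)| :=
        intervalIntegral.norm_integral_le_abs_of_norm_le (ae_of_all _ hpoint)
          ((continuous_const.mul
            (hA.norm.mul (continuous_picardWeight hA t₀))).intervalIntegrable _ _)
    _ = C / 2 * |sinh (2 * ∫ s in t₀..t, ‖A s‖)| := by
        rw [intervalIntegral.integral_const_mul, integral_norm_mul_picardWeight hA, abs_mul,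
          abs_div, abs_of_nonneg hC, abs_two]
        ring
    _ ≤ C / 2 * picardWeight A t₀ t := by
        gcongr
        rw [abs_sinh, picardWeight, ← cosh_abs]
        exact (sinh_lt_cosh _).le

/-- The Picard operator of `x' = A x`, `x t₀ = x₀`, conjugated by `picardWeight`. -/
noncomputable def weightedPicard (hA : Continuous A) (t₀ : ℝ) (x₀ : E) (Y : ℝ →ᵇ E) : ℝ →ᵇ E :=
  BoundedContinuousFunction.ofNormedAddCommGroup
    (fun t => (picardWeight A t₀ t)⁻¹ • (x₀ + ∫ s in t₀..t, picardWeight A t₀ s • A s (Y s)))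
    (by
      have hw := continuous_picardWeight hA t₀
      have hint : Continuous fun t => ∫ s in t₀..t, picardWeight A t₀ s • A s (Y s) :=
        intervalIntegral.continuous_primitive
          (fun _ _ => (hw.smul (hA.clm_apply Y.continuous)).intervalIntegrable _ _) _
      exact (hw.inv₀ fun t => (picardWeight_pos A t₀ t).ne').smul (continuous_const.add hint))
    (‖x₀‖ + ‖Y‖ / 2)
    (by
      intro t
      have hw : 1 ≤ picardWeight A t₀ t := one_le_cosh _
      rw [norm_smul, norm_inv, norm_of_nonneg (picardWeight_pos A t₀ t).le,
        inv_mul_le_iff₀ (picardWeight_pos A t₀ t)]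
      calc ‖x₀ + ∫ s in t₀..t, picardWeight A t₀ s • A s (Y s)‖
          ≤ ‖x₀‖ + ‖Y‖ / 2 * picardWeight A t₀ t :=
            norm_add_le_of_le le_rfl
              (norm_integral_picardWeight_smul_le hA Y.norm_coe_le_norm t₀ t)
        _ ≤ picardWeight A t₀ t * (‖x₀‖ + ‖Y‖ / 2) := by
            linarith [le_mul_of_one_le_left (norm_nonneg x₀) hw])

lemma weightedPicard_apply (hA : Continuous A) (t₀ : ℝ) (x₀ : E) (Y : ℝ →ᵇ E) (t : ℝ) :
    weightedPicard hA t₀ x₀ Y t =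
      (picardWeight A t₀ t)⁻¹ • (x₀ + ∫ s in t₀..t, picardWeight A t₀ s • A s (Y s)) :=
  rfl

lemma contractingWith_weightedPicard (hA : Continuous A) (t₀ : ℝ) (x₀ : E) :
    ContractingWith (1 / 2) (weightedPicard hA t₀ x₀) := by
  refine ⟨by norm_num, LipschitzWith.of_dist_le_mul fun Y Z => ?_⟩
  refine (BoundedContinuousFunction.dist_le (by positivity)).2 fun t => ?_
  have hint (Y : ℝ →ᵇ E) : IntervalIntegrable (fun s => picardWeight A t₀ s • A s (Y s))
      volume t₀ t :=
    ((continuous_picardWeight hA t₀).smul (hA.clm_apply Y.continuous)).intervalIntegrable _ _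
  have hdiff : weightedPicard hA t₀ x₀ Y t - weightedPicard hA t₀ x₀ Z t =
      (picardWeight A t₀ t)⁻¹ • ∫ s in t₀..t, picardWeight A t₀ s • A s ((Y - Z) s) := by
    simp only [weightedPicard_apply, ← smul_sub, add_sub_add_left_eq_sub,
      ← intervalIntegral.integral_sub (hint Y) (hint Z), BoundedContinuousFunction.coe_sub,
      Pi.sub_apply, map_sub]
  rw [dist_eq_norm, hdiff, norm_smul, norm_inv, norm_of_nonneg (picardWeight_pos A t₀ t).le,
    inv_mul_le_iff₀ (picardWeight_pos A t₀ t), dist_eq_norm]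
  calc ‖∫ s in t₀..t, picardWeight A t₀ s • A s ((Y - Z) s)‖
      ≤ ‖Y - Z‖ / 2 * picardWeight A t₀ t :=
        norm_integral_picardWeight_smul_le hA (Y - Z).norm_coe_le_norm t₀ t
    _ = picardWeight A t₀ t * (((1 / 2 : NNReal) : ℝ) * ‖Y - Z‖) := by push_cast; ring

variable [CompleteSpace E]

theorem exists_isIntegralCurve_linear (hA : Continuous A) (t₀ : ℝ) (x₀ : E) :
    ∃ X : ℝ → E, X t₀ = x₀ ∧ IsIntegralCurve X fun t x => A t x := by
  have hcontr := contractingWith_weightedPicard hA t₀ x₀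
  set Y : ℝ →ᵇ E := hcontr.fixedPoint
  set X : ℝ → E := fun t => x₀ + ∫ s in t₀..t, picardWeight A t₀ s • A s (Y s)
  have hX (t : ℝ) : X t = picardWeight A t₀ t • Y t := by
    have hfix : Y t = (picardWeight A t₀ t)⁻¹ • X t :=
      congrArg (fun Z : ℝ →ᵇ E => Z t) hcontr.fixedPoint_isFixedPt.symm
    rw [hfix, smul_inv_smul₀ (picardWeight_pos A t₀ t).ne']
  refine ⟨X, by simp [X], fun t => ?_⟩
  have hcont : Continuous fun s => picardWeight A t₀ s • A s (Y s) :=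
    (continuous_picardWeight hA t₀).smul (hA.clm_apply Y.continuous)
  change HasDerivAt X (A t (X t)) t
  rw [hX t, map_smul]
  exact (hcont.integral_hasStrictDerivAt t₀ t).hasDerivAt.const_add x₀

/-- Grönwall's inequality in integral form, with a time-dependent rate. -/
lemma le_mul_exp_integral_of_le_add_integral {f k : ℝ → ℝ} (hf : Continuous f) (hk : Continuous k)
    (hk0 : ∀ t, 0 ≤ k t) {δ a b : ℝ} (h : ∀ t ∈ Icc a b, f t ≤ δ + ∫ s in a..t, k s * f s)
    {t : ℝ} (ht : t ∈ Icc a b) : f t ≤ δ * exp (∫ s in a..t, k s) := by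
  set G : ℝ → ℝ := fun t => (δ + ∫ s in a..t, k s * f s) * exp (-∫ s in a..t, k s) with hG
  have hderiv (t : ℝ) : HasDerivAt G
      (k t * (f t - (δ + ∫ s in a..t, k s * f s)) * exp (-∫ s in a..t, k s)) t :=
    ((((hk.mul hf).integral_hasStrictDerivAt a t).hasDerivAt.const_add δ).mul
      (hk.integral_hasStrictDerivAt a t).hasDerivAt.neg.exp).congr_deriv
        (by simp only [Pi.mul_apply, Pi.neg_apply]; ring)
  have hanti : AntitoneOn G (Icc a b) := by
    refine antitoneOn_of_hasDerivWithinAt_nonpos (convex_Icc a b)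
      (fun t _ => (hderiv t).continuousAt.continuousWithinAt)
      (fun t _ => (hderiv t).hasDerivWithinAt) fun t ht => ?_
    exact mul_nonpos_of_nonpos_of_nonneg
      (mul_nonpos_of_nonneg_of_nonpos (hk0 t) (sub_nonpos.2 (h t (interior_subset ht))))
      (exp_pos _).le
  have hGt : G t ≤ δ := by
    simpa [hG] using hanti (left_mem_Icc.2 (ht.1.trans ht.2)) ht ht.1
  calc f t ≤ δ + ∫ s in a..t, k s * f s := h t ht
    _ = G t * exp (∫ s in a..t, k s) := by
        rw [hG, mul_assoc, ← exp_add, neg_add_cancel, exp_zero, mul_one]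
    _ ≤ δ * exp (∫ s in a..t, k s) := by gcongr

lemma norm_sub_le_of_isIntegralCurve_linear (hA : Continuous A)
    (hB : Continuous B) (hX : IsIntegralCurve X fun t x => A t x)
    (hY : IsIntegralCurve Y fun t x => B t x) {a b K : ℝ} (ha : X a = Y a)
    (hK : ∀ t ∈ Icc a b, ‖Y t‖ ≤ K) {t : ℝ} (ht : t ∈ Icc a b) :
    ‖X t - Y t‖ ≤ (∫ s in a..b, ‖A s - B s‖) * K * exp (∫ s in a..t, ‖A s‖) := by
  have hXc : Continuous X := hX.continuous
  have hYc : Continuous Y := hY.continuous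
  refine le_mul_exp_integral_of_le_add_integral (f := fun t => ‖X t - Y t‖) (by fun_prop) hA.norm
    (fun _ => norm_nonneg _) (fun t ht => ?_) ht
  have hderiv (s : ℝ) : HasDerivAt (fun s => X s - Y s) (A s (X s - Y s) + (A s - B s) (Y s)) s :=
    ((hX s).sub (hY s)).congr_deriv (by simp)
  have hpoint : ∀ s ∈ Icc a t,
      ‖A s (X s - Y s) + (A s - B s) (Y s)‖ ≤ ‖A s - B s‖ * K + ‖A s‖ * ‖X s - Y s‖ := fun s hs =>
    (norm_add_le _ _).trans <| (add_comm _ _).trans_le <| add_le_add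
      ((A s - B s).le_opNorm_of_le (hK s ⟨hs.1, hs.2.trans ht.2⟩)) ((A s).le_opNorm _)
  have hK0 : 0 ≤ K := (norm_nonneg _).trans (hK t ht)
  calc ‖X t - Y t‖ = ‖∫ s in a..t, A s (X s - Y s) + (A s - B s) (Y s)‖ := by
        rw [intervalIntegral.integral_eq_sub_of_hasDerivAt (fun s _ => hderiv s)
          (Continuous.intervalIntegrable (by fun_prop) _ _), ha, sub_self, sub_zero]
    _ ≤ ∫ s in a..t, ‖A s - B s‖ * K + ‖A s‖ * ‖X s - Y s‖ :=
        intervalIntegral.norm_integral_le_of_norm_le ht.1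
          (ae_of_all _ fun s hs => hpoint s (Ioc_subset_Icc_self hs))
          (Continuous.intervalIntegrable (by fun_prop) _ _)
    _ = (∫ s in a..t, ‖A s - B s‖) * K + ∫ s in a..t, ‖A s‖ * ‖X s - Y s‖ := by
        rw [intervalIntegral.integral_add (Continuous.intervalIntegrable (by fun_prop) _ _)
          (Continuous.intervalIntegrable (by fun_prop) _ _), intervalIntegral.integral_mul_const]
    _ ≤ (∫ s in a..b, ‖A s - B s‖) * K + ∫ s in a..t, ‖A s‖ * ‖X s - Y s‖ := by
        gcongr
        exact intervalIntegral.integral_mono_interval le_rfl ht.1 ht.2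
          (ae_of_all _ fun _ => norm_nonneg _) (Continuous.intervalIntegrable (by fun_prop) _ _)

lemma eqOn_Icc_of_isIntegralCurve_linear (hA : Continuous A) (hB : Continuous B)
    (hX : IsIntegralCurve X fun t x => A t x) (hY : IsIntegralCurve Y fun t x => B t x) {a b : ℝ}
    (hAB : EqOn A B (Icc a b)) (ha : X a = Y a) : EqOn X Y (Icc a b) := by
  obtain ⟨K, hK⟩ := isCompact_Icc.exists_bound_of_continuousOn
    (hY.continuous.continuousOn (s := Icc a b))
  intro t ht
  have hint : ∫ s in a..b, ‖A s - B s‖ = 0 :=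
    (intervalIntegral.integral_congr fun s hs => by
      rw [uIcc_of_le (ht.1.trans ht.2)] at hs
      simp [hAB hs]).trans intervalIntegral.integral_zero
  simpa [hint, sub_eq_zero] using norm_sub_le_of_isIntegralCurve_linear hA hB hX hY ha hK ht

lemma exists_forall_integral_norm_sub_le_imp_norm_sub_lt (hB : Continuous B)
    (hY : IsIntegralCurve Y fun t x => B t x) (a b : ℝ) {ε : ℝ} (hε : 0 < ε) :
    ∃ η > 0, ∀ (A : ℝ → E →L[ℝ] E) (X : ℝ → E), Continuous A →
      (IsIntegralCurve X fun t x => A t x) → X a = Y a → ∫ s in a..b, ‖A s - B s‖ ≤ η →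
      ∀ t ∈ Icc a b, ‖X t - Y t‖ < ε := by
  obtain ⟨K, hK⟩ := isCompact_Icc.exists_bound_of_continuousOn
    (hY.continuous.continuousOn (s := Icc a b))
  set C : ℝ := (|K| + 1) * exp ((∫ s in a..b, ‖B s‖) + 1)
  have hC : 0 < C := by positivity
  refine ⟨min 1 (ε / (2 * C)), by positivity, fun A X hA hX ha hAB t ht => ?_⟩
  have hab : a ≤ b := ht.1.trans ht.2
  have hexp : ∫ s in a..t, ‖A s‖ ≤ (∫ s in a..b, ‖B s‖) + 1 :=
    calc ∫ s in a..t, ‖A s‖ ≤ ∫ s in a..b, ‖A s‖ :=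
          intervalIntegral.integral_mono_interval le_rfl ht.1 ht.2
            (ae_of_all _ fun _ => norm_nonneg _) (hA.norm.intervalIntegrable _ _)
      _ ≤ ∫ s in a..b, ‖B s‖ + ‖A s - B s‖ :=
          intervalIntegral.integral_mono_on hab (hA.norm.intervalIntegrable _ _)
            (Continuous.intervalIntegrable (by fun_prop) _ _)
            fun s _ => by simpa using norm_add_le (B s) (A s - B s)
      _ ≤ (∫ s in a..b, ‖B s‖) + 1 := by
          rw [intervalIntegral.integral_add (hB.norm.intervalIntegrable _ _)
            (Continuous.intervalIntegrable (by fun_prop) _ _)]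
          gcongr
          exact hAB.trans (min_le_left _ _)
  calc ‖X t - Y t‖ ≤ (∫ s in a..b, ‖A s - B s‖) * (|K| + 1) * exp (∫ s in a..t, ‖A s‖) :=
        norm_sub_le_of_isIntegralCurve_linear hA hB hX hY ha
          (fun s hs => (hK s hs).trans (by linarith [le_abs_self K])) ht
    _ ≤ ε / (2 * C) * (|K| + 1) * exp ((∫ s in a..b, ‖B s‖) + 1) := by
        gcongr
        exact hAB.trans (min_le_right _ _)
    _ = ε / 2 := by rw [mul_assoc]; change ε / (2 * C) * C = _; field_simp
    _ < ε := half_lt_self hε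

end LinearODE

section Hill

variable {E : Type*} [NormedAddCommGroup E] [NormedSpace ℝ E] {q r : ℝ → ℝ} {v w : ℝ → E}

/-- The linear map `(x, y) ↦ (y, q x)`, the right-hand side of the first-order form of the Hill
equation `v'' = q v`. -/
noncomputable def hillField (q : ℝ) : E × E →L[ℝ] E × E :=
  (ContinuousLinearMap.inl ℝ E E).comp (.snd ℝ E E) +
    q • (ContinuousLinearMap.inr ℝ E E).comp (.fst ℝ E E)

@[simp]
lemma hillField_apply (q : ℝ) (x : E × E) : hillField q x = (x.2, q • x.1) := by
  simp [hillField]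

lemma continuous_hillField : Continuous (hillField : ℝ → E × E →L[ℝ] E × E) := by
  unfold hillField
  fun_prop

lemma norm_hillField_sub_le (q r : ℝ) :
    ‖(hillField q : E × E →L[ℝ] E × E) - hillField r‖ ≤ |q - r| := by
  refine ContinuousLinearMap.opNorm_le_bound _ (abs_nonneg _) fun x => ?_
  have hsub : (hillField q - hillField r : E × E →L[ℝ] E × E) x = (0, (q - r) • x.1) := by
    simp [sub_smul]
  rw [hsub, Prod.norm_mk, norm_zero, max_eq_right (norm_nonneg _), norm_smul, Real.norm_eq_abs]
  gcongr
  exact norm_fst_le x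

/-- The phase curve `(v, v')` of `v`. -/
noncomputable def phase (v : ℝ → E) (t : ℝ) : E × E := (v t, deriv v t)

/-- `v` solves the Hill equation `v'' = q v` on the whole line. -/
def IsHillSolution (q : ℝ → ℝ) (v : ℝ → E) : Prop :=
  IsIntegralCurve (phase v) fun t x => hillField (q t) x

lemma isHillSolution_iff : IsHillSolution q v ↔
    ∀ t, HasDerivAt v (deriv v t) t ∧ HasDerivAt (deriv v) (q t • v t) t := by
  refine forall_congr' fun t => ?_
  change HasDerivAt (phase v) (hillField (q t) (phase v t)) t ↔ _
  rw [hillField_apply]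
  exact ⟨fun h => ⟨h.fst, h.snd⟩, fun h => h.1.prodMk h.2⟩

theorem exists_isHillSolution [CompleteSpace E] (hq : Continuous q) (t₀ : ℝ) (x₀ : E × E) :
    ∃ v : ℝ → E, phase v t₀ = x₀ ∧ IsHillSolution q v := by
  obtain ⟨X, hX₀, hX⟩ := exists_isIntegralCurve_linear (continuous_hillField.comp hq) t₀ x₀
  have hphase : phase (fun t => (X t).1) = X := by
    ext1 t
    have hderiv : deriv (fun t => (X t).1) t = (X t).2 := by
      simpa using (hX t).hasFDerivAt.fst.hasDerivAt.deriv
    rw [phase, hderiv]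
  exact ⟨fun t => (X t).1, by rw [hphase, hX₀], by rwa [IsHillSolution, hphase]⟩

lemma IsHillSolution.eqOn_phase_Icc [CompleteSpace E] (hv : IsHillSolution q v)
    (hw : IsHillSolution r w) (hq : Continuous q) (hr : Continuous r) {a b : ℝ}
    (hqr : EqOn q r (Icc a b)) (ha : phase v a = phase w a) :
    EqOn (phase v) (phase w) (Icc a b) :=
  eqOn_Icc_of_isIntegralCurve_linear (continuous_hillField.comp hq) (continuous_hillField.comp hr)
    hv hw (fun _ ht => congrArg hillField (hqr ht)) ha

lemma IsHillSolution.exists_forall_integral_abs_sub_le_imp_norm_sub_lt [CompleteSpace E]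
    (hw : IsHillSolution r w) (hr : Continuous r) {a b : ℝ} (hab : a ≤ b) {ε : ℝ} (hε : 0 < ε) :
    ∃ η > 0, ∀ (q : ℝ → ℝ) (v : ℝ → E), Continuous q → IsHillSolution q v →
      phase v a = phase w a → ∫ t in a..b, |q t - r t| ≤ η →
      ∀ t ∈ Icc a b, ‖phase v t - phase w t‖ < ε := by
  obtain ⟨η, hη, H⟩ := exists_forall_integral_norm_sub_le_imp_norm_sub_lt
    (continuous_hillField.comp hr) hw a b hε
  refine ⟨η, hη, fun q v hq hv ha hint => H _ _ (continuous_hillField.comp hq) hv ha ?_⟩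
  refine (intervalIntegral.integral_mono_on hab (Continuous.intervalIntegrable ?_ _ _)
    (Continuous.intervalIntegrable (by fun_prop) _ _)
    fun t _ => norm_hillField_sub_le (q t) (r t)).trans hint
  exact ((continuous_hillField.comp hq).sub (continuous_hillField.comp hr)).norm

lemma contDiff_of_isIntegralCurve {γ : ℝ → E} {f : ℝ → E → E}
    (hf : ContDiff ℝ ∞ (Function.uncurry f)) (hγ : IsIntegralCurve γ f) : ContDiff ℝ ∞ γ := by
  have hderiv : deriv γ = fun t => Function.uncurry f (t, γ t) := funext fun t => (hγ t).deriv
  refine contDiff_infty.2 fun n => ?_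
  induction n with
  | zero => exact contDiff_zero.2 hγ.continuous
  | succ n ih =>
    push_cast
    refine contDiff_succ_iff_deriv.2 ⟨fun t => (hγ t).differentiableAt, by simp, ?_⟩
    rw [hderiv]
    exact (hf.of_le (mod_cast le_top)).comp (contDiff_id.prodMk ih)

lemma IsHillSolution.contDiff (hv : IsHillSolution q v) (hq : ContDiff ℝ ∞ q) :
    ContDiff ℝ ∞ v := by
  refine (contDiff_of_isIntegralCurve ?_ hv).fst
  simp only [Function.uncurry_def, hillField_apply]
  fun_prop

end Hill

section Wronskian

/-- The determinant of the pair of plane vectors `z`, `w`. -/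
def wedge (z w : ℂ) : ℝ := z.re * w.im - z.im * w.re

@[simp]
lemma wedge_self (z : ℂ) : wedge z z = 0 := by rw [wedge, mul_comm, sub_self]

@[simp]
lemma wedge_add_right (z w₁ w₂ : ℂ) : wedge z (w₁ + w₂) = wedge z w₁ + wedge z w₂ := by
  simp only [wedge, Complex.add_re, Complex.add_im]; ring

@[simp]
lemma wedge_smul_left (c : ℝ) (z w : ℂ) : wedge (c • z) w = c * wedge z w := by
  simp only [wedge, Complex.smul_re, Complex.smul_im, smul_eq_mul]; ring

@[simp]
lemma wedge_smul_right (c : ℝ) (z w : ℂ) : wedge z (c • w) = c * wedge z w := by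
  simp only [wedge, Complex.smul_re, Complex.smul_im, smul_eq_mul]; ring

lemma wedge_smul_add_wedge_smul (e₁ e₂ z : ℂ) :
    wedge z e₂ • e₁ + wedge e₁ z • e₂ = wedge e₁ e₂ • z := by
  apply Complex.ext <;> simp [wedge] <;> ring

lemma contDiff_wedge {n : WithTop ℕ∞} : ContDiff ℝ n fun z : ℂ × ℂ => wedge z.1 z.2 := by
  have hre : ContDiff ℝ n Complex.re := Complex.reCLM.contDiff
  have him : ContDiff ℝ n Complex.im := Complex.imCLM.contDiff
  unfold wedge
  fun_prop

lemma hasDerivAt_re_comp {v : ℝ → ℂ} {v' : ℂ} {t : ℝ} (hv : HasDerivAt v v' t) :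
    HasDerivAt (fun s => (v s).re) v'.re t :=
  Complex.reCLM.hasFDerivAt.comp_hasDerivAt t hv

lemma hasDerivAt_im_comp {v : ℝ → ℂ} {v' : ℂ} {t : ℝ} (hv : HasDerivAt v v' t) :
    HasDerivAt (fun s => (v s).im) v'.im t :=
  Complex.imCLM.hasFDerivAt.comp_hasDerivAt t hv

lemma hasDerivAt_wedge {v w : ℝ → ℂ} {v' w' : ℂ} {t : ℝ} (hv : HasDerivAt v v' t)
    (hw : HasDerivAt w w' t) :
    HasDerivAt (fun s => wedge (v s) (w s)) (wedge v' (w t) + wedge (v t) w') t :=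
  (((hasDerivAt_re_comp hv).mul (hasDerivAt_im_comp hw)).sub
    ((hasDerivAt_im_comp hv).mul (hasDerivAt_re_comp hw))).congr_deriv (by
      simp only [wedge]; ring)

/-- The Wronskian `det (v, v')` of a plane curve. -/
noncomputable def wronskian (v : ℝ → ℂ) (t : ℝ) : ℝ := wedge (v t) (deriv v t)

/-- The potential of a plane curve of Wronskian `1`: the function `q` with `v'' = q v`. -/
noncomputable def potential (v : ℝ → ℂ) (t : ℝ) : ℝ := wedge (deriv (deriv v) t) (deriv v t)

lemma wronskian_smul {f : ℝ → ℝ} {w : ℝ → ℂ} {t : ℝ} (hf : DifferentiableAt ℝ f t)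
    (hw : DifferentiableAt ℝ w t) :
    wronskian (fun s => f s • w s) t = f t ^ 2 * wronskian w t := by
  rw [wronskian, deriv_fun_smul hf hw]
  simp only [wedge_add_right, wedge_smul_left, wedge_smul_right, wedge_self, wronskian]
  ring

lemma contDiff_wronskian {v : ℝ → ℂ} (hv : ContDiff ℝ ∞ v) : ContDiff ℝ ∞ (wronskian v) :=
  contDiff_wedge.comp (hv.prodMk (contDiff_infty_iff_deriv.1 hv).2)

lemma hasDerivAt_wronskian {v : ℝ → ℂ} (hv : ContDiff ℝ ∞ v) (t : ℝ) :
    HasDerivAt (wronskian v) (wedge (v t) (deriv (deriv v) t)) t := by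
  have hv' := contDiff_infty_iff_deriv.1 hv
  exact (hasDerivAt_wedge (hv'.1 t).hasDerivAt
    ((contDiff_infty_iff_deriv.1 hv'.2).1 t).hasDerivAt).congr_deriv (by rw [wedge_self, zero_add])

/-- A smooth plane curve `v` with `det (v, v') = 1`; these are the curves whose coordinates are
solutions with Wronskian `1` of a common Hill equation. -/
structure IsUnimodular (v : ℝ → ℂ) : Prop where
  contDiff : ContDiff ℝ ∞ v
  wronskian_eq_one (t : ℝ) : wronskian v t = 1

namespace IsUnimodular

variable {v : ℝ → ℂ}

lemma differentiable (hv : IsUnimodular v) : Differentiable ℝ v :=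
  hv.contDiff.differentiable (by simp)

lemma contDiff_deriv (hv : IsUnimodular v) : ContDiff ℝ ∞ (deriv v) :=
  (contDiff_infty_iff_deriv.1 hv.contDiff).2

lemma contDiff_potential (hv : IsUnimodular v) : ContDiff ℝ ∞ (potential v) :=
  contDiff_wedge.comp
    ((contDiff_infty_iff_deriv.1 hv.contDiff_deriv).2.prodMk hv.contDiff_deriv)

lemma ne_zero (hv : IsUnimodular v) (t : ℝ) : v t ≠ 0 := by
  intro h
  simpa [wronskian, wedge, h] using hv.wronskian_eq_one t

lemma isHillSolution (hv : IsUnimodular v) : IsHillSolution (potential v) v := by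
  refine isHillSolution_iff.2 fun t =>
    ⟨((contDiff_infty_iff_deriv.1 hv.contDiff).1 t).hasDerivAt, ?_⟩
  have hderiv : wedge (v t) (deriv (deriv v) t) = 0 := by
    have hconst : wronskian v = fun _ => 1 := funext hv.wronskian_eq_one
    simpa [hconst] using (hasDerivAt_wronskian hv.contDiff t).deriv.symm
  have hcramer : potential v t • v t = deriv (deriv v) t := by
    have := wedge_smul_add_wedge_smul (v t) (deriv v t) (deriv (deriv v) t)
    rwa [hderiv, zero_smul, add_zero, ← wronskian, hv.wronskian_eq_one, one_smul] at this
  rw [hcramer]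
  exact ((contDiff_infty_iff_deriv.1 hv.contDiff_deriv).1 t).hasDerivAt

end IsUnimodular

lemma IsHillSolution.isUnimodular {q : ℝ → ℝ} {v : ℝ → ℂ} (hv : IsHillSolution q v)
    (hq : ContDiff ℝ ∞ q) {t₀ : ℝ} (h₀ : wronskian v t₀ = 1) : IsUnimodular v := by
  have hsmooth := hv.contDiff hq
  refine ⟨hsmooth, fun t => h₀ ▸ ?_⟩
  refine is_const_of_deriv_eq_zero (fun t => (hasDerivAt_wronskian hsmooth t).differentiableAt)
    (fun t => ?_) t t₀
  rw [(hasDerivAt_wronskian hsmooth t).deriv, ((isHillSolution_iff.1 hv) t).2.deriv,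
    wedge_smul_right, wedge_self, mul_zero]

lemma IsHillSolution.potential_eq {q : ℝ → ℝ} {v : ℝ → ℂ} (hv : IsHillSolution q v) {t : ℝ}
    (ht : wronskian v t = 1) : potential v t = q t := by
  rw [potential, ((isHillSolution_iff.1 hv) t).2.deriv, wedge_smul_left, ← wronskian, ht, mul_one]

/-- The multiple of the plane curve `w` that has Wronskian `1`, provided that the Wronskian of `w`
is positive. -/
noncomputable def unimodularize (w : ℝ → ℂ) (t : ℝ) : ℂ := (√(wronskian w t))⁻¹ • w t

lemma isUnimodular_unimodularize {w : ℝ → ℂ} (hw : ContDiff ℝ ∞ w) (hpos : ∀ t, 0 < wronskian w t) :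
    IsUnimodular (unimodularize w) := by
  have hscale : ContDiff ℝ ∞ fun t => (√(wronskian w t))⁻¹ :=
    ((contDiff_wronskian hw).sqrt fun t => (hpos t).ne').inv fun t => (sqrt_pos.2 (hpos t)).ne'
  refine ⟨hscale.smul hw, fun t => ?_⟩
  have hsmul := wronskian_smul (hscale.differentiable (by simp) t) (hw.differentiable (by simp) t)
  rw [inv_pow, sq_sqrt (hpos t).le, inv_mul_cancel₀ (hpos t).ne'] at hsmul
  exact hsmul

lemma IsUnimodular.unimodularize_eq {v : ℝ → ℂ} (hv : IsUnimodular v) : unimodularize v = v :=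
  funext fun t => by rw [unimodularize, hv.wronskian_eq_one, sqrt_one, inv_one, one_smul]

end Wronskian

section EqOn

variable {F : Type*} [NormedAddCommGroup F] [NormedSpace ℝ F]

lemma eqOn_deriv_of_eqOn {f g : ℝ → F} {s : Set ℝ} (hs : UniqueDiffOn ℝ s)
    (hf : Differentiable ℝ f) (hg : Differentiable ℝ g) (h : EqOn f g s) :
    EqOn (deriv f) (deriv g) s := fun t ht => by
  rw [← (hf t).derivWithin (hs t ht), derivWithin_congr h (h ht), (hg t).derivWithin (hs t ht)]

lemma eqOn_phase_of_eqOn {v w : ℝ → F} {s : Set ℝ} (hs : UniqueDiffOn ℝ s)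
    (hv : Differentiable ℝ v) (hw : Differentiable ℝ w) (h : EqOn v w s) :
    EqOn (phase v) (phase w) s := fun t ht => by
  rw [phase, phase, h ht, eqOn_deriv_of_eqOn hs hv hw h ht]

lemma eqOn_potential_of_eqOn {v w : ℝ → ℂ} {s : Set ℝ} (hs : UniqueDiffOn ℝ s)
    (hv : ContDiff ℝ ∞ v) (hw : ContDiff ℝ ∞ w) (h : EqOn v w s) :
    EqOn (potential v) (potential w) s := fun t ht => by
  have hv' := contDiff_infty_iff_deriv.1 hv
  have hw' := contDiff_infty_iff_deriv.1 hw
  have h' := eqOn_deriv_of_eqOn hs hv'.1 hw'.1 h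
  have h'' := eqOn_deriv_of_eqOn hs (hv'.2.differentiable (by simp))
    (hw'.2.differentiable (by simp)) h'
  rw [potential, potential, h' ht, h'' ht]

lemma eqOn_wronskian_of_eqOn {v w : ℝ → ℂ} {s : Set ℝ} (hs : UniqueDiffOn ℝ s)
    (hv : Differentiable ℝ v) (hw : Differentiable ℝ w) (h : EqOn v w s) :
    EqOn (wronskian v) (wronskian w) s := fun t ht => by
  rw [wronskian, wronskian, h ht, eqOn_deriv_of_eqOn hs hv hw h ht]

lemma eqOn_unimodularize_of_eqOn {v w : ℝ → ℂ} {s : Set ℝ} (hs : UniqueDiffOn ℝ s)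
    (hv : Differentiable ℝ v) (hw : Differentiable ℝ w) (h : EqOn v w s) :
    EqOn (unimodularize v) (unimodularize w) s := fun t ht => by
  rw [unimodularize, unimodularize, h ht, eqOn_wronskian_of_eqOn hs hv hw h ht]

end EqOn

section PolarAngle

lemma exists_contDiff_log {v : ℝ → ℂ} (hv : ContDiff ℝ ∞ v) (hv₀ : ∀ t, v t ≠ 0) (t₀ : ℝ) :
    ∃ L : ℝ → ℂ, ContDiff ℝ ∞ L ∧ L t₀ = 0 ∧ ∀ t, v t = v t₀ * Complex.exp (L t) := by
  have hv' := contDiff_infty_iff_deriv.1 hv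
  have hquot : ContDiff ℝ ∞ fun t => deriv v t / v t := by
    simp only [div_eq_mul_inv]
    exact hv'.2.mul (hv.inv hv₀)
  set L : ℝ → ℂ := fun t => ∫ s in t₀..t, deriv v s / v s
  have hL (t : ℝ) : HasDerivAt L (deriv v t / v t) t :=
    (hquot.continuous.integral_hasStrictDerivAt t₀ t).hasDerivAt
  have hL₀ : L t₀ = 0 := intervalIntegral.integral_same
  have hconst (t : ℝ) : HasDerivAt (fun s => v s * Complex.exp (-L s)) 0 t :=
    ((hv'.1 t).hasDerivAt.mul (hL t).neg.cexp).congr_deriv (by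
      simp only [Pi.neg_apply]; field_simp [hv₀ t]; ring)
  refine ⟨L, contDiff_infty_iff_deriv.2 ⟨fun t => (hL t).differentiableAt, ?_⟩, hL₀, fun t => ?_⟩
  · rwa [funext fun t => (hL t).deriv]
  · have hval := is_const_of_deriv_eq_zero (fun s => (hconst s).differentiableAt)
      (fun s => (hconst s).deriv) t t₀
    simp only [hL₀, neg_zero, Complex.exp_zero, mul_one] at hval
    rw [← hval, mul_assoc, ← Complex.exp_add, neg_add_cancel, Complex.exp_zero, mul_one]

theorem exists_contDiff_polarAngle {v : ℝ → ℂ} (hv : ContDiff ℝ ∞ v) (hv₀ : ∀ t, v t ≠ 0)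
    {t₀ α : ℝ} (hα : v t₀ = ‖v t₀‖ * Complex.exp (α * Complex.I)) :
    ∃ θ : ℝ → ℝ, ContDiff ℝ ∞ θ ∧ θ t₀ = α ∧
      ∀ t, v t = ‖v t‖ * Complex.exp (θ t * Complex.I) := by
  obtain ⟨L, hL, hL₀, hvL⟩ := exists_contDiff_log hv hv₀ t₀
  refine ⟨fun t => α + (L t).im, contDiff_const.add (Complex.imCLM.contDiff.comp hL), by simp [hL₀],
    fun t => ?_⟩
  have hnorm : ‖v t‖ = ‖v t₀‖ * rexp (L t).re := by rw [hvL t, norm_mul, Complex.norm_exp]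
  calc v t = ‖v t₀‖ * Complex.exp (α * Complex.I) *
        Complex.exp ((L t).re + (L t).im * Complex.I) := by
        rw [← hα, Complex.re_add_im, hvL t]
    _ = ‖v t‖ * Complex.exp ((α + (L t).im : ℝ) * Complex.I) := by
        rw [hnorm, Complex.ofReal_mul, Complex.ofReal_exp, Complex.ofReal_add, add_mul,
          Complex.exp_add, Complex.exp_add]
        ring

lemma wronskian_cexp_mul_I {θ : ℝ → ℝ} {t : ℝ} (hθ : DifferentiableAt ℝ θ t) :
    wronskian (fun s => Complex.exp (θ s * Complex.I)) t = deriv θ t := by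
  rw [wronskian, (hθ.hasDerivAt.ofReal_comp.mul_const Complex.I).cexp.deriv]
  simp only [wedge, Complex.mul_re, Complex.mul_im, Complex.exp_ofReal_mul_I_re,
    Complex.exp_ofReal_mul_I_im, Complex.ofReal_re, Complex.ofReal_im, Complex.I_re, Complex.I_im]
  linear_combination deriv θ t * sin_sq_add_cos_sq (θ t)

/-- The unimodular curve with polar angle `θ`, for `θ` smooth with positive derivative; its modulus
is then necessarily `1 / √θ'`. -/
noncomputable def curveOfAngle (θ : ℝ → ℝ) : ℝ → ℂ :=
  unimodularize fun t => Complex.exp (θ t * Complex.I)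

variable {θ : ℝ → ℝ}

lemma contDiff_cexp_mul_I (hθ : ContDiff ℝ ∞ θ) :
    ContDiff ℝ ∞ fun t => Complex.exp (θ t * Complex.I) :=
  ((Complex.ofRealCLM.contDiff.comp hθ).mul contDiff_const).cexp

lemma isUnimodular_curveOfAngle (hθ : ContDiff ℝ ∞ θ) (hpos : ∀ t, 0 < deriv θ t) :
    IsUnimodular (curveOfAngle θ) :=
  isUnimodular_unimodularize (contDiff_cexp_mul_I hθ) fun t => by
    rw [wronskian_cexp_mul_I (hθ.differentiable (by simp) t)]
    exact hpos t

lemma curveOfAngle_apply {t : ℝ} (hθ : DifferentiableAt ℝ θ t) :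
    curveOfAngle θ t = (√(deriv θ t))⁻¹ • Complex.exp (θ t * Complex.I) := by
  rw [curveOfAngle, unimodularize, wronskian_cexp_mul_I hθ]

lemma curveOfAngle_eq_norm_mul (hθ : Differentiable ℝ θ) (t : ℝ) :
    curveOfAngle θ t = ‖curveOfAngle θ t‖ * Complex.exp (θ t * Complex.I) := by
  rw [curveOfAngle_apply (hθ t), norm_smul, Complex.norm_exp_ofReal_mul_I, mul_one,
    norm_of_nonneg (by positivity), Complex.real_smul]

lemma phase_curveOfAngle_id : phase (curveOfAngle id) 0 = (1, Complex.I) := by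
  have hcurve : curveOfAngle id = fun t : ℝ => Complex.exp (t * Complex.I) := by
    ext1 t
    simp [curveOfAngle_apply differentiableAt_id]
  have hderiv : HasDerivAt (fun t : ℝ => Complex.exp (t * Complex.I)) Complex.I 0 := by
    simpa using ((hasDerivAt_id (0 : ℝ)).ofReal_comp.mul_const Complex.I).cexp
  rw [phase, hcurve, hderiv.deriv]
  simp

lemma eqOn_curveOfAngle {θ₀ θ₁ : ℝ → ℝ} {s : Set ℝ} (hs : UniqueDiffOn ℝ s)
    (hθ₀ : ContDiff ℝ ∞ θ₀) (hθ₁ : ContDiff ℝ ∞ θ₁) (h : EqOn θ₀ θ₁ s) :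
    EqOn (curveOfAngle θ₀) (curveOfAngle θ₁) s :=
  eqOn_unimodularize_of_eqOn hs ((contDiff_cexp_mul_I hθ₀).differentiable (by simp))
    ((contDiff_cexp_mul_I hθ₁).differentiable (by simp)) fun t ht => by rw [h ht]

variable {v : ℝ → ℂ}

lemma IsUnimodular.norm_sq_mul_deriv_polarAngle (hv : IsUnimodular v) (hθ : ContDiff ℝ ∞ θ)
    (h : ∀ t, v t = ‖v t‖ * Complex.exp (θ t * Complex.I)) (t : ℝ) :
    ‖v t‖ ^ 2 * deriv θ t = 1 := by
  have hnorm : DifferentiableAt ℝ (fun s => ‖v s‖) t :=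
    (hv.differentiable t).norm ℝ (hv.ne_zero t)
  have hsmul := wronskian_smul hnorm ((contDiff_cexp_mul_I hθ).differentiable (by simp) t)
  simp only [Complex.real_smul, ← h] at hsmul
  rw [← wronskian_cexp_mul_I (hθ.differentiable (by simp) t), ← hsmul, hv.wronskian_eq_one]

lemma IsUnimodular.deriv_polarAngle_pos (hv : IsUnimodular v) (hθ : ContDiff ℝ ∞ θ)
    (h : ∀ t, v t = ‖v t‖ * Complex.exp (θ t * Complex.I)) (t : ℝ) : 0 < deriv θ t :=
  pos_of_mul_pos_right (by rw [hv.norm_sq_mul_deriv_polarAngle hθ h t]; exact one_pos)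
    (sq_nonneg ‖v t‖)

lemma IsUnimodular.curveOfAngle_eq (hv : IsUnimodular v) (hθ : ContDiff ℝ ∞ θ)
    (h : ∀ t, v t = ‖v t‖ * Complex.exp (θ t * Complex.I)) : curveOfAngle θ = v := by
  ext1 t
  have hnorm : (√(deriv θ t))⁻¹ = ‖v t‖ := by
    rw [eq_inv_of_mul_eq_one_right (hv.norm_sq_mul_deriv_polarAngle hθ h t), sqrt_inv,
      sqrt_sq (norm_nonneg _), inv_inv]
  rw [curveOfAngle_apply (hθ.differentiable (by simp) t), hnorm, Complex.real_smul, ← h]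

lemma polarAngle_add_arg {z w : ℂ} {φ : ℝ} (hz : z = ‖z‖ * Complex.exp (φ * Complex.I))
    (hz₀ : z ≠ 0) :
    w = ‖w‖ * Complex.exp ((φ + (w / z).arg : ℝ) * Complex.I) := by
  have hquot := Complex.norm_mul_exp_arg_mul_I (w / z)
  rw [norm_div, Complex.ofReal_div] at hquot
  have hz' : (‖z‖ : ℂ) ≠ 0 := by simpa using hz₀
  rw [Complex.ofReal_add, add_mul, Complex.exp_add]
  calc w = z * (w / z) := (mul_div_cancel₀ w hz₀).symm
    _ = (‖z‖ * Complex.exp (φ * Complex.I)) *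
        (‖w‖ / ‖z‖ * Complex.exp ((w / z).arg * Complex.I)) := by rw [hquot, ← hz]
    _ = _ := by field_simp

lemma div_mem_slitPlane_of_norm_sub_lt {z w : ℂ} (h : ‖w - z‖ < ‖z‖) :
    w / z ∈ Complex.slitPlane := by
  have hz₀ : z ≠ 0 := norm_pos_iff.1 ((norm_nonneg _).trans_lt h)
  have hquot : w / z = 1 + (w - z) / z := by field_simp; ring
  rw [hquot]
  refine Complex.mem_slitPlane_of_norm_lt_one ?_
  rwa [norm_div, div_lt_one (norm_pos_iff.2 hz₀)]

end PolarAngle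

section Plateau

/-- A smooth cutoff supported in `[a, b]` with values in `[0, 1]`; as `n` grows, the part of
`(a, b)` on which it equals `1` exhausts `(a, b)`. -/
noncomputable def plateau (a b : ℝ) (n : ℕ) (t : ℝ) : ℝ :=
  smoothTransition (n * (t - a)) * smoothTransition (n * (b - t))

variable {a b t : ℝ} {n : ℕ}

lemma contDiff_plateau : ContDiff ℝ ∞ (plateau a b n) :=
  (smoothTransition.contDiff.comp (by fun_prop)).mul (smoothTransition.contDiff.comp (by fun_prop))

lemma plateau_mem_Icc (a b t : ℝ) (n : ℕ) : plateau a b n t ∈ Icc (0 : ℝ) 1 :=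
  ⟨mul_nonneg (smoothTransition.nonneg _) (smoothTransition.nonneg _),
    mul_le_one₀ (smoothTransition.le_one _) (smoothTransition.nonneg _) (smoothTransition.le_one _)⟩

lemma plateau_eq_zero_of_notMem (ht : t ∉ Ioo a b) : plateau a b n t = 0 := by
  rcases not_and_or.1 ht with h | h
  · rw [plateau, smoothTransition.zero_of_nonpos
      (mul_nonpos_of_nonneg_of_nonpos n.cast_nonneg (by linarith)), zero_mul]
  · rw [plateau, smoothTransition.zero_of_nonpos (x := n * (b - t))
      (mul_nonpos_of_nonneg_of_nonpos n.cast_nonneg (by linarith)), mul_zero]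

lemma plateau_pos (hn : n ≠ 0) (ht : t ∈ Ioo a b) : 0 < plateau a b n t := by
  have hn' : (0 : ℝ) < n := by positivity
  exact mul_pos (smoothTransition.pos_of_pos (mul_pos hn' (sub_pos.2 ht.1)))
    (smoothTransition.pos_of_pos (mul_pos hn' (sub_pos.2 ht.2)))

lemma eventually_plateau_eq_one (ht : t ∈ Ioo a b) : ∀ᶠ n in atTop, plateau a b n t = 1 := by
  have hlarge {d : ℝ} (hd : 0 < d) : ∀ᶠ n : ℕ in atTop, 1 ≤ n * d :=
    (tendsto_natCast_atTop_atTop.atTop_mul_const hd).eventually_ge_atTop 1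
  filter_upwards [hlarge (sub_pos.2 ht.1), hlarge (sub_pos.2 ht.2)] with n hna hnb
  rw [plateau, smoothTransition.one_of_one_le hna, smoothTransition.one_of_one_le hnb, one_mul]

lemma tendsto_integral_plateau {f : ℝ × ℝ → ℝ} (hf : Continuous f) (hab : a ≤ b) :
    Tendsto (fun n => ∫ t in a..b, f (t, plateau a b n t)) atTop (𝓝 (∫ t in a..b, f (t, 1))) := by
  obtain ⟨C, hC⟩ := (isCompact_Icc.prod isCompact_Icc).exists_bound_of_continuousOn
    (hf.continuousOn (s := Icc a b ×ˢ Icc 0 1))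
  refine intervalIntegral.tendsto_integral_filter_of_dominated_convergence (fun _ => C)
    (.of_forall fun n => ?_) (.of_forall fun n => .of_forall fun t ht => ?_)
    intervalIntegrable_const ?_
  · exact (hf.comp (continuous_id.prodMk contDiff_plateau.continuous)).aestronglyMeasurable
  · rw [uIoc_of_le hab] at ht
    exact hC _ ⟨Ioc_subset_Icc_self ht, plateau_mem_Icc a b t n⟩
  · filter_upwards [Measure.ae_ne volume b] with t htb ht
    rw [uIoc_of_le hab] at ht
    refine tendsto_const_nhds.congr' ?_
    filter_upwards [eventually_plateau_eq_one ⟨ht.1, ht.2.lt_of_ne htb⟩] with n hn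
    rw [hn]

end Plateau

section Gluing

variable {a b : ℝ}

lemma exists_contDiff_pos_glue {p₀ p₁ : ℝ → ℝ} (h₀ : ContDiff ℝ ∞ p₀) (h₁ : ContDiff ℝ ∞ p₁)
    (hpos₀ : ∀ t, 0 < p₀ t) (hpos₁ : ∀ t, 0 < p₁ t) (hab : a < b) :
    ∃ p : ℝ → ℝ, ContDiff ℝ ∞ p ∧ (∀ t, 0 < p t) ∧ EqOn p p₀ (Iic a) ∧ EqOn p p₁ (Ici b) := by
  set χ : ℝ → ℝ := fun t => smoothTransition ((t - a) / (b - a))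
  have hχ : ContDiff ℝ ∞ χ := smoothTransition.contDiff.comp (by fun_prop)
  refine ⟨fun t => (1 - χ t) * p₀ t + χ t * p₁ t, by fun_prop, fun t => ?_, fun t ht => ?_,
    fun t ht => ?_⟩
  · exact convex_Ioi (0 : ℝ) (hpos₀ t) (hpos₁ t)
      (sub_nonneg.2 (smoothTransition.le_one _)) (smoothTransition.nonneg _) (by ring)
  · have hχt : χ t = 0 := smoothTransition.zero_of_nonpos
      (div_nonpos_of_nonpos_of_nonneg (sub_nonpos.2 ht) (sub_pos.2 hab).le)
    simp [hχt]
  · have hχt : χ t = 1 := smoothTransition.one_of_one_le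
      ((one_le_div (sub_pos.2 hab)).2 (sub_le_sub_right ht a))
    simp [hχt]

lemma exists_contDiff_pos_integral_eq {p : ℝ → ℝ} (hp : ContDiff ℝ ∞ p) (hpos : ∀ t, 0 < p t)
    (hab : a < b) {β : ℝ} (hβ : 0 < β) :
    ∃ q : ℝ → ℝ, ContDiff ℝ ∞ q ∧ (∀ t, 0 < q t) ∧ (∀ t ∉ Ioo a b, q t = p t) ∧
      ∫ t in a..b, q t = β := by
  have hplateau {n : ℕ} : Continuous (plateau a b n) := contDiff_plateau.continuous
  have hlim := tendsto_integral_plateau (f := fun x => (1 - x.2) * p x.1)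
    (by have := hp.continuous; fun_prop) hab.le
  simp only [sub_self, zero_mul, intervalIntegral.integral_zero] at hlim
  obtain ⟨n, hn⟩ := (hlim.eventually_lt_const hβ).exists
  have hbump : 0 < ∫ t in a..b, plateau a b 1 t :=
    intervalIntegral.intervalIntegral_pos_of_pos_on (hplateau.intervalIntegrable _ _)
      (fun t ht => plateau_pos one_ne_zero ht) hab
  set c : ℝ := (β - ∫ t in a..b, (1 - plateau a b n t) * p t) / ∫ t in a..b, plateau a b 1 t
  have hc : 0 < c := div_pos (sub_pos.2 hn) hbump
  refine ⟨fun t => (1 - plateau a b n t) * p t + c * plateau a b 1 t, ?_, fun t => ?_,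
    fun t ht => ?_, ?_⟩
  · exact ((contDiff_const.sub contDiff_plateau).mul hp).add (contDiff_const.mul contDiff_plateau)
  · by_cases ht : t ∈ Ioo a b
    · exact add_pos_of_nonneg_of_pos
        (mul_nonneg (sub_nonneg.2 (plateau_mem_Icc a b t n).2) (hpos t).le)
        (mul_pos hc (plateau_pos one_ne_zero ht))
    · simpa [plateau_eq_zero_of_notMem ht] using hpos t
  · simp [plateau_eq_zero_of_notMem ht]
  · have hpc := hp.continuous
    rw [intervalIntegral.integral_add (Continuous.intervalIntegrable (by fun_prop) _ _)
      (Continuous.intervalIntegrable (by fun_prop) _ _), intervalIntegral.integral_const_mul,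
      div_mul_cancel₀ _ hbump.ne', add_sub_cancel]

lemma exists_contDiff_deriv_pos_glue {θ₀ θ₁ : ℝ → ℝ} (h₀ : ContDiff ℝ ∞ θ₀)
    (h₁ : ContDiff ℝ ∞ θ₁) (hpos₀ : ∀ t, 0 < deriv θ₀ t) (hpos₁ : ∀ t, 0 < deriv θ₁ t)
    (hab : a < b) (hθ : θ₀ a < θ₁ b) :
    ∃ θ : ℝ → ℝ, ContDiff ℝ ∞ θ ∧ (∀ t, 0 < deriv θ t) ∧ EqOn θ θ₀ (Iic a) ∧
      EqOn θ θ₁ (Ici b) := by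
  have h₀' := contDiff_infty_iff_deriv.1 h₀
  have h₁' := contDiff_infty_iff_deriv.1 h₁
  obtain ⟨m, hm, hmpos, hm₀, hm₁⟩ := exists_contDiff_pos_glue h₀'.2 h₁'.2 hpos₀ hpos₁ hab
  obtain ⟨p, hp, hppos, hpm, hint⟩ :=
    exists_contDiff_pos_integral_eq hm hmpos hab (sub_pos.2 hθ)
  have hderiv (t : ℝ) : HasDerivAt (fun t => θ₀ a + ∫ s in a..t, p s) (p t) t :=
    (hp.continuous.integral_hasStrictDerivAt a t).hasDerivAt.const_add _
  have hprim {θ : ℝ → ℝ} (hθ : ContDiff ℝ ∞ θ) {c d : ℝ} (h : ∀ t ∈ uIcc c d, p t = deriv θ t) :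
      ∫ s in c..d, p s = θ d - θ c := by
    have hθ' := contDiff_infty_iff_deriv.1 hθ
    rw [intervalIntegral.integral_congr h, intervalIntegral.integral_deriv_eq_sub
      (fun t _ => hθ'.1 t) (hθ'.2.continuous.intervalIntegrable _ _)]
  refine ⟨fun t => θ₀ a + ∫ s in a..t, p s, contDiff_infty_iff_deriv.2
    ⟨fun t => (hderiv t).differentiableAt, by rwa [funext fun t => (hderiv t).deriv]⟩,
    fun t => (hderiv t).deriv ▸ hppos t, fun t ht => ?_, fun t ht => ?_⟩
  · have hpt : ∀ s ∈ uIcc a t, p s = deriv θ₀ s := fun s hs => by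
      have hsa : s ≤ a := (uIcc_of_ge (mem_Iic.1 ht) ▸ hs).2
      rw [hpm s fun h => h.1.not_ge hsa, hm₀ hsa]
    simp only [hprim h₀ hpt, add_sub_cancel]
  · have hpt : ∀ s ∈ uIcc b t, p s = deriv θ₁ s := fun s hs => by
      have hbs : b ≤ s := (uIcc_of_le (mem_Ici.1 ht) ▸ hs).1
      rw [hpm s fun h => h.2.not_ge hbs, hm₁ hbs]
    simp only [← intervalIntegral.integral_add_adjacent_intervals
      (hp.continuous.intervalIntegrable a b) (hp.continuous.intervalIntegrable b t), hint,
      hprim h₁ hpt]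
    ring

end Gluing

section Approximation

/-- `u` is a smooth function that differs from the constant `c₀` only inside `(a, b)`, and does
differ there. -/
structure IsPerturbation (c₀ a b : ℝ) (u : ℝ → ℝ) : Prop where
  contDiff : ContDiff ℝ ∞ u
  eq_of_notMem : ∀ t ∉ Ioo a b, u t = c₀
  exists_ne : ∃ t ∈ Ioo a b, u t ≠ c₀

variable {c₀ a b c : ℝ} {g r : ℝ → ℝ}

lemma IsPerturbation.exists_concat {u w : ℝ → ℝ} (hu : IsPerturbation c₀ a b u)
    (hw : IsPerturbation c₀ b c w) :
    ∃ x, IsPerturbation c₀ a c x ∧ EqOn x u (Iic b) ∧ EqOn x w (Ici b) := by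
  obtain ⟨t₀, ht₀, hut₀⟩ := hu.exists_ne
  obtain ⟨t₁, ht₁, -⟩ := hw.exists_ne
  have hleft : EqOn (fun t => u t + w t - c₀) u (Iic b) := fun t ht => by
    simp [hw.eq_of_notMem t fun h => h.1.not_ge ht]
  have hright : EqOn (fun t => u t + w t - c₀) w (Ici b) := fun t ht => by
    simp [hu.eq_of_notMem t fun h => h.2.not_ge ht]
  refine ⟨fun t => u t + w t - c₀, ⟨(hu.contDiff.add hw.contDiff).sub contDiff_const,
    fun t ht => ?_, t₀, ⟨ht₀.1, ht₀.2.trans (ht₁.1.trans ht₁.2)⟩, ?_⟩, hleft, hright⟩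
  · rcases le_total t b with htb | hbt
    · exact (hleft htb).trans <| hu.eq_of_notMem t fun h =>
        ht ⟨h.1, h.2.trans (ht₁.1.trans ht₁.2)⟩
    · exact (hright hbt).trans <| hw.eq_of_notMem t fun h =>
        ht ⟨(ht₀.1.trans ht₀.2).trans h.1, h.2⟩
  · exact (hleft ht₀.2.le).trans_ne hut₀

lemma IsPerturbation.exists_integral_eq_add {u w : ℝ → ℝ} {f : ℝ × ℝ → ℝ} (hf : Continuous f)
    (hu : IsPerturbation c₀ a b u) (hw : IsPerturbation c₀ b c w) :
    ∃ x, IsPerturbation c₀ a c x ∧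
      ∫ t in a..c, f (t, x t) = (∫ t in a..b, f (t, u t)) + ∫ t in b..c, f (t, w t) := by
  obtain ⟨x, hx, hxu, hxw⟩ := hu.exists_concat hw
  obtain ⟨_, ht₀, -⟩ := hu.exists_ne
  obtain ⟨_, ht₁, -⟩ := hw.exists_ne
  have hcont : Continuous fun t => f (t, x t) :=
    hf.comp (continuous_id.prodMk hx.contDiff.continuous)
  have hleft : ∫ t in a..b, f (t, x t) = ∫ t in a..b, f (t, u t) :=
    intervalIntegral.integral_congr fun t ht => by
      rw [uIcc_of_le (ht₀.1.trans ht₀.2).le] at ht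
      simp only [hxu ht.2]
  have hright : ∫ t in b..c, f (t, x t) = ∫ t in b..c, f (t, w t) :=
    intervalIntegral.integral_congr fun t ht => by
      rw [uIcc_of_le (ht₁.1.trans ht₁.2).le] at ht
      simp only [hxw ht.1]
  exact ⟨x, hx, by rw [← hleft, ← hright, intervalIntegral.integral_add_adjacent_intervals
    (hcont.intervalIntegrable a b) (hcont.intervalIntegrable b c)]⟩

lemma exists_isPerturbation_integral_abs_comp_sub_const_lt (hg : Continuous g)
    (hsurj : Function.Surjective g) (c₀ y : ℝ) (hab : a < b) {η : ℝ} (hη : 0 < η) :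
    ∃ u, IsPerturbation c₀ a b u ∧ ∫ t in a..b, |g (u t) - y| < η := by
  obtain ⟨c, hc₀ : c ≠ c₀, hc : (b - a) * |g c - y| < η⟩ :=
    (dense_compl_singleton c₀).exists_mem_open
      (isOpen_lt (f := fun c => (b - a) * |g c - y|) (by fun_prop) continuous_const)
      ((hsurj y).imp fun x hx => by simpa [hx] using hη)
  have hlim := tendsto_integral_plateau (f := fun x => |g (c₀ + (c - c₀) * x.2) - y|)
    (by fun_prop) hab.le
  simp only [mul_one, add_sub_cancel, intervalIntegral.integral_const, smul_eq_mul] at hlim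
  obtain ⟨n, hn, hn₀⟩ := ((hlim.eventually_lt_const hc).and (eventually_ne_atTop 0)).exists
  obtain ⟨m, hm⟩ := exists_between hab
  refine ⟨fun t => c₀ + (c - c₀) * plateau a b n t,
    ⟨contDiff_const.add (contDiff_const.mul contDiff_plateau), fun t ht => ?_, m, hm, ?_⟩, hn⟩
  · simp [plateau_eq_zero_of_notMem ht]
  · simpa [sub_eq_zero, hc₀] using (plateau_pos hn₀ hm).ne'

lemma exists_isPerturbation_integral_abs_comp_sub_le_of_forall_abs_sub_le (hg : Continuous g)
    (hsurj : Function.Surjective g) (hr : Continuous r) (c₀ : ℝ) (hab : a < b) {η : ℝ} (hη : 0 < η)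
    (hosc : ∀ t ∈ Icc a b, |r a - r t| ≤ η) :
    ∃ u, IsPerturbation c₀ a b u ∧ ∫ t in a..b, |g (u t) - r t| ≤ 2 * η * (b - a) := by
  obtain ⟨u, hu, hint⟩ := exists_isPerturbation_integral_abs_comp_sub_const_lt hg hsurj c₀ (r a)
    hab (mul_pos hη (sub_pos.2 hab))
  have huc := hu.contDiff.continuous
  refine ⟨u, hu, ?_⟩
  calc ∫ t in a..b, |g (u t) - r t| ≤ ∫ t in a..b, |g (u t) - r a| + η :=
        intervalIntegral.integral_mono_on hab.le (Continuous.intervalIntegrable (by fun_prop) _ _)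
          (Continuous.intervalIntegrable (by fun_prop) _ _) fun t ht =>
          (abs_sub_le _ (r a) _).trans (by gcongr; exact hosc t ht)
    _ = (∫ t in a..b, |g (u t) - r a|) + η * (b - a) := by
        rw [intervalIntegral.integral_add (Continuous.intervalIntegrable (by fun_prop) _ _)
          intervalIntegrable_const, intervalIntegral.integral_const, smul_eq_mul, mul_comm η]
    _ ≤ 2 * η * (b - a) := by linarith

lemma forall_lt_of_forall_sub_lt {P : ℝ → ℝ → Prop} {δ : ℝ} (hδ : 0 < δ)
    (hsmall : ∀ a b, a < b → b - a < δ → P a b)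
    (hconcat : ∀ a b c, a < b → b < c → P a b → P b c → P a c) : ∀ a b, a < b → P a b := by
  have hdyadic (n : ℕ) : ∀ a b, a < b → b - a < 2 ^ n * δ → P a b := by
    induction n with
    | zero => simpa using hsmall
    | succ n ih =>
      intro a b hab hn
      rw [pow_succ] at hn
      exact hconcat a ((a + b) / 2) b (by linarith) (by linarith)
        (ih _ _ (by linarith) (by linarith)) (ih _ _ (by linarith) (by linarith))
  intro a b hab
  obtain ⟨n, hn⟩ := pow_unbounded_of_one_lt ((b - a) / δ) one_lt_two
  exact hdyadic n a b hab ((div_lt_iff₀ hδ).1 hn)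

theorem exists_isPerturbation_integral_abs_comp_sub_le (hg : Continuous g)
    (hsurj : Function.Surjective g) (hr : Continuous r) (c₀ : ℝ) (hab : a < b) {η : ℝ}
    (hη : 0 < η) :
    ∃ u, IsPerturbation c₀ a b u ∧ ∫ t in a..b, |g (u t) - r t| ≤ η := by
  have hba : 0 < b - a := sub_pos.2 hab
  set ε : ℝ := η / (2 * (b - a))
  have hε : 0 < ε := by positivity
  obtain ⟨δ, hδ, hosc⟩ := Metric.uniformContinuousOn_iff.1
    (isCompact_Icc.uniformContinuousOn_of_continuous (hr.continuousOn (s := Icc a b))) ε hε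
  have happrox : ∀ s t, s < t → a ≤ s → t ≤ b →
      ∃ u, IsPerturbation c₀ s t u ∧ ∫ x in s..t, |g (u x) - r x| ≤ 2 * ε * (t - s) := by
    refine forall_lt_of_forall_sub_lt hδ (fun s t hst hδst has htb => ?_)
      fun s m t hsm hmt hleft hright has htb => ?_
    · refine exists_isPerturbation_integral_abs_comp_sub_le_of_forall_abs_sub_le hg hsurj hr c₀ hst
        hε fun x hx => (hosc s ⟨has, hst.le.trans htb⟩ x ⟨has.trans hx.1, hx.2.trans htb⟩ ?_).le
      rw [dist_comm, Real.dist_eq, abs_of_nonneg (sub_nonneg.2 hx.1)]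
      linarith [hx.2]
    · obtain ⟨u, hu, hintu⟩ := hleft has (hmt.le.trans htb)
      obtain ⟨w, hw, hintw⟩ := hright (has.trans hsm.le) htb
      obtain ⟨x, hx, hintx⟩ := hu.exists_integral_eq_add
        (f := fun y => |g y.2 - r y.1|) (by fun_prop) hw
      exact ⟨x, hx, by simp only [hintx]; linarith⟩
  refine (happrox a b hab le_rfl le_rfl).imp fun u hu => ⟨hu.1, hu.2.trans_eq ?_⟩
  simp only [ε]
  field_simp

end Approximation

section ParametricSmoothness

variable {P F : Type*} [NormedAddCommGroup P] [NormedSpace ℝ P] [NormedAddCommGroup F]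
  [NormedSpace ℝ F] {x : P × ℝ}

lemma contDiffAt_uncurry_deriv {f : P → ℝ → F} (hf : ContDiffAt ℝ ∞ (Function.uncurry f) x) :
    ContDiffAt ℝ ∞ (Function.uncurry fun p => deriv (f p)) x := by
  have hf' : ContDiffAt ℝ ∞ (Function.uncurry fun y : P × ℝ => f y.1) (x, x.2) :=
    ContDiffAt.comp (x, x.2) (g := Function.uncurry f) hf
      ((contDiff_fst.fst.prodMk contDiff_snd).contDiffAt)
  exact (hf'.fderiv contDiffAt_snd le_rfl).clm_apply contDiffAt_const

variable {w : P → ℝ → ℂ}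

lemma contDiffAt_uncurry_wronskian (hw : ContDiffAt ℝ ∞ (Function.uncurry w) x) :
    ContDiffAt ℝ ∞ (Function.uncurry fun p => wronskian (w p)) x :=
  contDiff_wedge.contDiffAt.comp x (hw.prodMk (contDiffAt_uncurry_deriv hw))

lemma contDiffAt_uncurry_potential (hw : ContDiffAt ℝ ∞ (Function.uncurry w) x) :
    ContDiffAt ℝ ∞ (Function.uncurry fun p => potential (w p)) x :=
  contDiff_wedge.contDiffAt.comp x ((contDiffAt_uncurry_deriv (contDiffAt_uncurry_deriv hw)).prodMk
    (contDiffAt_uncurry_deriv hw))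

lemma contDiffAt_uncurry_unimodularize (hw : ContDiffAt ℝ ∞ (Function.uncurry w) x)
    (hpos : 0 < wronskian (w x.1) x.2) :
    ContDiffAt ℝ ∞ (Function.uncurry fun p => unimodularize (w p)) x :=
  (((contDiffAt_uncurry_wronskian hw).sqrt hpos.ne').inv (sqrt_pos.2 hpos).ne').smul hw

end ParametricSmoothness

section Steering

variable {q : ℝ → ℝ} {v : ℝ → ℂ} {b T : ℝ}

lemma deriv_continuousLinearMap_comp {E F : Type*} [NormedAddCommGroup E] [NormedSpace ℝ E]
    [NormedAddCommGroup F] [NormedSpace ℝ F] (L : E →L[ℝ] F) {v : ℝ → E}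
    (hv : Differentiable ℝ v) : deriv (L ∘ v) = L ∘ deriv v :=
  funext fun t => (L.hasFDerivAt.comp_hasDerivAt t (hv t).hasDerivAt).deriv

lemma IsHillSolution.continuousLinearMap_comp {E F : Type*} [NormedAddCommGroup E]
    [NormedSpace ℝ E] [NormedAddCommGroup F] [NormedSpace ℝ F] (L : E →L[ℝ] F) {v : ℝ → E}
    (hv : IsHillSolution q v) : IsHillSolution q (L ∘ v) := by
  have hv' := isHillSolution_iff.1 hv
  have hderiv : deriv (L ∘ v) = L ∘ deriv v :=
    deriv_continuousLinearMap_comp L fun t => (hv' t).1.differentiableAt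
  refine isHillSolution_iff.2 fun t => ⟨?_, ?_⟩
  · rw [hderiv]
    exact L.hasFDerivAt.comp_hasDerivAt t (hv' t).1
  · rw [hderiv, Function.comp_apply, ← map_smul]
    exact L.hasFDerivAt.comp_hasDerivAt t (hv' t).2

/-- The linear map of the plane that takes the pair `e` to the pair `z`, provided that
`wedge e.1 e.2 = 1`. -/
noncomputable def planeMap (e z : ℂ × ℂ) : ℂ →L[ℝ] ℂ :=
  (e.2.im • Complex.reCLM - e.2.re • Complex.imCLM).smulRight z.1 +
    (e.1.re • Complex.imCLM - e.1.im • Complex.reCLM).smulRight z.2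

lemma planeMap_apply (e z : ℂ × ℂ) (ζ : ℂ) :
    planeMap e z ζ = wedge ζ e.2 • z.1 + wedge e.1 ζ • z.2 := by
  simp [planeMap, wedge, mul_comm]

lemma planeMap_self {e : ℂ × ℂ} (he : wedge e.1 e.2 = 1) (ζ : ℂ) : planeMap e e ζ = ζ := by
  rw [planeMap_apply, wedge_smul_add_wedge_smul, he, one_smul]

/-- The image of the curve `v` under the linear map of the plane that takes the phase of `v` at
time `b` to `z`. -/
noncomputable def transport (v : ℝ → ℂ) (b : ℝ) (z : ℂ × ℂ) : ℝ → ℂ :=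
  planeMap (phase v b) z ∘ v

lemma IsUnimodular.phase_transport (hv : IsUnimodular v) (b : ℝ) (z : ℂ × ℂ) :
    phase (transport v b z) b = z := by
  have hb : wedge (v b) (deriv v b) = 1 := hv.wronskian_eq_one b
  rw [phase, transport, deriv_continuousLinearMap_comp _ hv.differentiable]
  simp [planeMap_apply, phase, hb]

lemma IsUnimodular.isUnimodular_transport (hv : IsUnimodular v) (b : ℝ) {z : ℂ × ℂ}
    (hz : wedge z.1 z.2 = 1) : IsUnimodular (transport v b z) :=
  (hv.isHillSolution.continuousLinearMap_comp _).isUnimodular hv.contDiff_potential (t₀ := b) <| by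
    have hphase := hv.phase_transport b z
    rwa [← hphase] at hz

lemma IsUnimodular.potential_transport (hv : IsUnimodular v) (b : ℝ) {z : ℂ × ℂ}
    (hz : wedge z.1 z.2 = 1) : potential (transport v b z) = potential v :=
  funext fun t => (hv.isHillSolution.continuousLinearMap_comp _).potential_eq
    ((hv.isUnimodular_transport b hz).wronskian_eq_one t)

/-- A curve that follows `transport v b z` up to time `b` and `v` from time `T` on. -/
noncomputable def steeringCurve (v : ℝ → ℂ) (b T : ℝ) (z : ℂ × ℂ) (t : ℝ) : ℂ :=
  (1 - smoothTransition ((t - b) / (T - b))) • transport v b z t +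
    smoothTransition ((t - b) / (T - b)) • v t

lemma contDiff_uncurry_steeringCurve (hv : ContDiff ℝ ∞ v) :
    ContDiff ℝ ∞ (Function.uncurry (steeringCurve v b T)) := by
  have hχ : ContDiff ℝ ∞ fun x : (ℂ × ℂ) × ℝ => smoothTransition ((x.2 - b) / (T - b)) :=
    smoothTransition.contDiff.comp (by fun_prop)
  have hwedge {f g : (ℂ × ℂ) × ℝ → ℂ} (hf : ContDiff ℝ ∞ f) (hg : ContDiff ℝ ∞ g) :
      ContDiff ℝ ∞ fun x => wedge (f x) (g x) := contDiff_wedge.comp (hf.prodMk hg)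
  have hv₂ : ContDiff ℝ ∞ fun x : (ℂ × ℂ) × ℝ => v x.2 := hv.comp contDiff_snd
  have htransport : ContDiff ℝ ∞ fun x : (ℂ × ℂ) × ℝ => transport v b x.1 x.2 := by
    simp only [transport, Function.comp_apply, planeMap_apply]
    exact ((hwedge hv₂ contDiff_const).smul contDiff_fst.fst).add
      ((hwedge contDiff_const hv₂).smul contDiff_fst.snd)
  exact ((contDiff_const.sub hχ).smul htransport).add (hχ.smul hv₂)

lemma contDiff_steeringCurve (hv : ContDiff ℝ ∞ v) (z : ℂ × ℂ) :
    ContDiff ℝ ∞ (steeringCurve v b T z) :=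
  ContDiff.comp (g := Function.uncurry (steeringCurve v b T)) (f := fun t => (z, t))
    (contDiff_uncurry_steeringCurve hv) (contDiff_const.prodMk contDiff_id)

lemma eqOn_steeringCurve_transport (hbT : b < T) (z : ℂ × ℂ) :
    EqOn (steeringCurve v b T z) (transport v b z) (Iic b) := fun t ht => by
  rw [steeringCurve, smoothTransition.zero_of_nonpos
    (div_nonpos_of_nonpos_of_nonneg (sub_nonpos.2 ht) (sub_pos.2 hbT).le)]
  simp

lemma eqOn_steeringCurve (hbT : b < T) (z : ℂ × ℂ) :
    EqOn (steeringCurve v b T z) v (Ici T) := fun t ht => by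
  rw [steeringCurve, smoothTransition.one_of_one_le
    ((one_le_div (sub_pos.2 hbT)).2 (sub_le_sub_right ht b))]
  simp

lemma IsUnimodular.steeringCurve_phase (hv : IsUnimodular v) (b T : ℝ) :
    steeringCurve v b T (phase v b) = v := by
  ext1 t
  rw [steeringCurve, transport, Function.comp_apply, planeMap_self (e := phase v b)
      (hv.wronskian_eq_one b), ← add_smul, sub_add_cancel, one_smul]

lemma IsUnimodular.eventually_steeringCurve (hv : IsUnimodular v) (b T : ℝ) {ε : ℝ} (hε : 0 < ε) :
    ∀ᶠ z in 𝓝 (phase v b), ∀ t ∈ Icc b T, 0 < wronskian (steeringCurve v b T z) t ∧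
      |potential (unimodularize (steeringCurve v b T z)) t - potential v t| < ε ∧
      ‖unimodularize (steeringCurve v b T z) t - v t‖ < ε := by
  refine isCompact_Icc.eventually_forall_of_forall_eventually fun t _ => ?_
  have hsmooth : ContDiffAt ℝ ∞ (Function.uncurry (steeringCurve v b T)) (phase v b, t) :=
    (contDiff_uncurry_steeringCurve hv.contDiff).contDiffAt
  have hpos : 0 < wronskian (steeringCurve v b T (phase v b)) t := by
    rw [hv.steeringCurve_phase, hv.wronskian_eq_one]
    exact one_pos
  have hunimod := contDiffAt_uncurry_unimodularize hsmooth hpos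
  have hself : unimodularize (steeringCurve v b T (phase v b)) = v := by
    rw [hv.steeringCurve_phase, hv.unimodularize_eq]
  have hpot : ContinuousAt (fun x : (ℂ × ℂ) × ℝ =>
      |potential (unimodularize (steeringCurve v b T x.1)) x.2 - potential v x.2|)
      (phase v b, t) :=
    ((contDiffAt_uncurry_potential hunimod).continuousAt.sub
      (hv.contDiff_potential.continuous.comp continuous_snd).continuousAt).abs
  have hval : ContinuousAt (fun x : (ℂ × ℂ) × ℝ =>
      ‖unimodularize (steeringCurve v b T x.1) x.2 - v x.2‖) (phase v b, t) :=
    (hunimod.continuousAt.sub (hv.contDiff.continuous.comp continuous_snd).continuousAt).norm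
  exact (((contDiffAt_uncurry_wronskian hsmooth).continuousAt.eventually_const_lt hpos).and
    ((hpot.eventually_lt_const (by simpa [hself] using hε)).and
      (hval.eventually_lt_const (by simpa [hself] using hε))))

lemma IsUnimodular.wronskian_steeringCurve_pos (hv : IsUnimodular v) (hbT : b < T) {z : ℂ × ℂ}
    (hz : wedge z.1 z.2 = 1) (h : ∀ t ∈ Icc b T, 0 < wronskian (steeringCurve v b T z) t) (t : ℝ) :
    0 < wronskian (steeringCurve v b T z) t := by
  have hW : Differentiable ℝ (steeringCurve v b T z) :=
    (contDiff_steeringCurve hv.contDiff z).differentiable (by simp)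
  have htransport := hv.isUnimodular_transport b hz
  rcases le_or_gt t b with htb | hbt
  · rw [eqOn_wronskian_of_eqOn (uniqueDiffOn_Iic b) hW htransport.differentiable
      (eqOn_steeringCurve_transport hbT z) htb, htransport.wronskian_eq_one]
    exact one_pos
  rcases le_or_gt T t with hTt | htT
  · rw [eqOn_wronskian_of_eqOn (uniqueDiffOn_Ici T) hW hv.differentiable
      (eqOn_steeringCurve hbT z) hTt, hv.wronskian_eq_one]
    exact one_pos
  · exact h t ⟨hbt.le, htT.le⟩

theorem IsUnimodular.exists_steering (hv : IsUnimodular v) (hbT : b < T) {ε : ℝ} (hε : 0 < ε) :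
    ∃ δ > 0, ∀ z : ℂ × ℂ, ‖z - phase v b‖ < δ → wedge z.1 z.2 = 1 →
      ∃ w, IsUnimodular w ∧ phase w b = z ∧ EqOn w v (Ici T) ∧
        EqOn (potential w) (potential v) (Iic b) ∧ (∀ t, |potential w t - potential v t| < ε) ∧
        ∀ t ∈ Icc b T, ‖w t - v t‖ < ε := by
  obtain ⟨δ, hδ, hclose⟩ := Metric.eventually_nhds_iff.1 (hv.eventually_steeringCurve b T hε)
  refine ⟨δ, hδ, fun z hzδ hz => ?_⟩
  have hmid := hclose ((dist_eq_norm z _).trans_lt hzδ)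
  have hW := contDiff_steeringCurve (b := b) (T := T) hv.contDiff z
  have hW' := hW.differentiable (by simp)
  have htransport := hv.isUnimodular_transport b hz
  have hw : IsUnimodular (unimodularize (steeringCurve v b T z)) :=
    isUnimodular_unimodularize hW
      (hv.wronskian_steeringCurve_pos hbT hz fun t ht => (hmid t ht).1)
  have hleft := eqOn_unimodularize_of_eqOn (uniqueDiffOn_Iic b) hW' htransport.differentiable
    (eqOn_steeringCurve_transport hbT z)
  have hright := eqOn_unimodularize_of_eqOn (uniqueDiffOn_Ici T) hW' hv.differentiable
    (eqOn_steeringCurve hbT z)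
  rw [htransport.unimodularize_eq] at hleft
  rw [hv.unimodularize_eq] at hright
  have hpotleft := eqOn_potential_of_eqOn (uniqueDiffOn_Iic b) hw.contDiff htransport.contDiff hleft
  have hpotright := eqOn_potential_of_eqOn (uniqueDiffOn_Ici T) hw.contDiff hv.contDiff hright
  rw [hv.potential_transport b hz] at hpotleft
  refine ⟨_, hw, ?_, hright, hpotleft, fun t => ?_, fun t ht => (hmid t ht).2.2⟩
  · rw [eqOn_phase_of_eqOn (uniqueDiffOn_Iic b) hw.differentiable htransport.differentiable hleft
      self_mem_Iic, hv.phase_transport]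
  rcases le_or_gt t b with htb | hbt
  · simpa [hpotleft htb] using hε
  rcases le_or_gt T t with hTt | htT
  · simpa [hpotright hTt] using hε
  · exact (hmid t ⟨hbt.le, htT.le⟩).2.1

end Steering

section Periodization

variable {F : Type*} [NormedAddCommGroup F] [NormedSpace ℝ F]

lemma contDiff_comp_toIcoMod {φ : ℝ → F} (hφ : ContDiff ℝ ∞ φ) {a T : ℝ} (hT : 0 < T) {c : F}
    (hc : ∀ t ∉ Ioo a (a + T), φ t = c) : ContDiff ℝ ∞ fun t => φ (toIcoMod hT a t) := by
  refine contDiff_iff_contDiffAt.2 fun t => ?_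
  set n : ℤ := toIcoDiv hT a t
  have ht : t - n • T ∈ Ico a (a + T) := toIcoMod_mem_Ico hT a t
  have hsmooth : ContDiff ℝ ∞ fun s => φ (s - n • T) + φ (s - (n - 1) • T) - c :=
    ((hφ.comp (contDiff_id.sub contDiff_const)).add
      (hφ.comp (contDiff_id.sub contDiff_const))).sub contDiff_const
  refine hsmooth.contDiffAt.congr_of_eventuallyEq ?_
  have hnear : ∀ᶠ s in 𝓝 t, s ∈ Ioo (a + (n - 1) • T) (a + (n + 1) • T) := by
    refine Ioo_mem_nhds ?_ ?_ <;> simp only [sub_smul, add_smul, one_smul] <;>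
      linarith [ht.1, ht.2]
  filter_upwards [hnear] with s hs
  simp only [sub_smul, add_smul, one_smul, mem_Ioo] at hs ⊢
  rcases le_or_gt (a + n • T) s with hns | hns
  · have hdiv : toIcoDiv hT a s = n :=
      toIcoDiv_eq_of_sub_zsmul_mem_Ico hT ⟨by linarith, by linarith [hs.2]⟩
    rw [toIcoMod, hdiv, hc (s - (n • T - T)) fun h => by linarith [h.2], add_sub_cancel_right]
  · have hdiv : toIcoDiv hT a s = n - 1 :=
      toIcoDiv_eq_of_sub_zsmul_mem_Ico hT
        (by rw [sub_smul, one_smul]; exact ⟨by linarith [hs.1], by linarith⟩)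
    rw [toIcoMod, hdiv, hc (s - n • T) fun h => by linarith [h.1], add_sub_cancel_left,
      sub_smul, one_smul]

theorem exists_contDiff_periodic_eqOn {φ : ℝ → F} (hφ : ContDiff ℝ ∞ φ) {a T : ℝ} (hT : 0 < T)
    {c : F} (hc : ∀ t ∉ Ioo a (a + T), φ t = c) :
    ∃ u : ℝ → F, ContDiff ℝ ∞ u ∧ Function.Periodic u T ∧ EqOn u φ (Icc a (a + T)) := by
  refine ⟨_, contDiff_comp_toIcoMod hφ hT hc, fun t => by simp only [toIcoMod_add_right],
    fun t ht => ?_⟩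
  rcases ht.2.lt_or_eq with htT | rfl
  · simp only [(toIcoMod_eq_self hT).2 ⟨ht.1, htT⟩]
  · simp only [toIcoMod_add_right, toIcoMod_apply_left]
    rw [hc a (by simp), hc (a + T) (by simp)]

end Periodization

section LocalSection

lemma exists_contDiffAt_section {𝕜 : Type*} [RCLike 𝕜] {g : 𝕜 → 𝕜} (hg : ContDiff 𝕜 ∞ g) {c : 𝕜}
    (hc : deriv g c ≠ 0) :
    ∃ (s : 𝕜 → 𝕜) (ρ : ℝ), 0 < ρ ∧ s (g c) = c ∧
      ∀ p, ‖p - g c‖ < ρ → ContDiffAt 𝕜 ∞ s p ∧ g (s p) = p := by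
  have hg' := contDiff_infty_iff_deriv.1 hg
  have hfderiv := (hg'.1 c).hasDerivAt.hasFDerivAt_equiv hc
  set Ψ := hg.contDiffAt.toOpenPartialHomeomorph g hfderiv (by simp)
  have hc_source : c ∈ Ψ.source :=
    hg.contDiffAt.mem_toOpenPartialHomeomorph_source hfderiv (by simp)
  have hleft : Ψ.symm (g c) = c := Ψ.left_inv hc_source
  have hnear : ∀ᶠ p in 𝓝 (g c), p ∈ Ψ.target ∧ deriv g (Ψ.symm p) ≠ 0 := by
    refine Eventually.and (Ψ.open_target.mem_nhds (Ψ.map_source hc_source)) ?_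
    refine ContinuousAt.eventually_ne (g := fun p => deriv g (Ψ.symm p)) ?_ (by rwa [hleft])
    exact hg'.2.continuous.continuousAt.comp (Ψ.continuousAt_symm (Ψ.map_source hc_source))
  obtain ⟨ρ, hρ, hball⟩ := Metric.eventually_nhds_iff.1 hnear
  refine ⟨Ψ.symm, ρ, hρ, hleft, fun p hp => ?_⟩
  obtain ⟨hp_target, hp_deriv⟩ := hball ((dist_eq_norm p _).trans_lt hp)
  exact ⟨Ψ.contDiffAt_symm_deriv hp_deriv hp_target (hg'.1 _).hasDerivAt hg.contDiffAt,
    Ψ.right_inv hp_target⟩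

lemma exists_deriv_ne_zero_of_surjective {𝕜 : Type*} [RCLike 𝕜] {g : 𝕜 → 𝕜}
    (hg : Differentiable 𝕜 g) (hsurj : Function.Surjective g) : ∃ c, deriv g c ≠ 0 := by
  by_contra! hzero
  obtain ⟨x, hx⟩ := hsurj 0
  obtain ⟨y, hy⟩ := hsurj 1
  exact zero_ne_one (hx ▸ hy ▸ is_const_of_deriv_eq_zero hg hzero x y)

end LocalSection

section PeriodicControl

variable {g : ℝ → ℝ} {c₀ b T : ℝ}

lemma IsUnimodular.exists_isPerturbation_norm_phase_sub_lt {v₀ : ℝ → ℂ} (hv₀ : IsUnimodular v₀)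
    (hg : ContDiff ℝ ∞ g) (hsurj : Function.Surjective g) (c₀ : ℝ) {a : ℝ} (hab : a < b) {δ : ℝ}
    (hδ : 0 < δ) :
    ∃ u v, IsPerturbation c₀ a b u ∧ IsUnimodular v ∧ IsHillSolution (g ∘ u) v ∧
      phase v a = phase v₀ a ∧ ∀ t ∈ Icc a b, ‖phase v t - phase v₀ t‖ < δ := by
  have hr : Continuous (potential v₀) := hv₀.contDiff_potential.continuous
  obtain ⟨η, hη, hclose⟩ :=
    hv₀.isHillSolution.exists_forall_integral_abs_sub_le_imp_norm_sub_lt hr hab.le hδ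
  obtain ⟨u, hu, hint⟩ :=
    exists_isPerturbation_integral_abs_comp_sub_le hg.continuous hsurj hr c₀ hab hη
  have hgu : ContDiff ℝ ∞ (g ∘ u) := hg.comp hu.contDiff
  obtain ⟨v, hva, hv⟩ := exists_isHillSolution hgu.continuous a (phase v₀ a)
  have hwronskian : wronskian v a = 1 := by
    have hva' := Prod.mk.inj hva
    rw [← hv₀.wronskian_eq_one a, wronskian, wronskian, hva'.1, hva'.2]
  exact ⟨u, v, hu, hv.isUnimodular hgu hwronskian, hv, hva,
    hclose (g ∘ u) v hgu.continuous hv hva hint⟩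

lemma exists_periodic_control_of_isPerturbation {u₀ q s : ℝ → ℝ} {ρ : ℝ}
    (hu₀ : IsPerturbation c₀ 0 b u₀) (hbT : b < T) (hsc : s (g c₀) = c₀)
    (hs : ∀ p, ‖p - g c₀‖ < ρ → ContDiffAt ℝ ∞ s p ∧ g (s p) = p) (hq : ContDiff ℝ ∞ q)
    (hqρ : ∀ t, |q t - g c₀| < ρ) (hqb : ∀ t ≤ b, q t = g c₀) (hqT : ∀ t ≥ T, q t = g c₀) :
    ∃ u : ℝ → ℝ, ContDiff ℝ ∞ u ∧ Function.Periodic u T ∧ (¬ ∃ c, u = fun _ => c) ∧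
      EqOn (g ∘ u) (g ∘ u₀) (Icc 0 b) ∧ EqOn (g ∘ u) q (Icc b T) := by
  obtain ⟨t₀, ht₀, hut₀⟩ := hu₀.exists_ne
  have hb : 0 < b := ht₀.1.trans ht₀.2
  have hsq : ContDiff ℝ ∞ (s ∘ q) :=
    contDiff_iff_contDiffAt.2 fun t => (hs _ (hqρ t)).1.comp t hq.contDiffAt
  set φ : ℝ → ℝ := fun t => u₀ t + s (q t) - c₀
  have hφleft : EqOn φ u₀ (Iic b) := fun t ht => by simp [φ, hqb t ht, hsc]
  have hφright : EqOn φ (s ∘ q) (Ici b) := fun t ht => by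
    simp [φ, hu₀.eq_of_notMem t fun h => h.2.not_ge ht]
  have hφ : ContDiff ℝ ∞ φ := (hu₀.contDiff.add hsq).sub contDiff_const
  have hφc : ∀ t ∉ Ioo 0 (0 + T), φ t = c₀ := fun t ht => by
    rw [zero_add] at ht
    rcases le_total t b with htb | hbt
    · exact (hφleft htb).trans (hu₀.eq_of_notMem t fun h => ht ⟨h.1, h.2.trans hbT⟩)
    · rw [hφright hbt, Function.comp_apply,
        hqT t (not_lt.1 fun h => ht ⟨hb.trans_le hbt, h⟩), hsc]
  obtain ⟨u, hu, hper, huφ⟩ := exists_contDiff_periodic_eqOn hφ (hb.trans hbT) hφc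
  rw [zero_add] at huφ
  have hu_left : EqOn u u₀ (Icc 0 b) := fun t ht =>
    (huφ ⟨ht.1, ht.2.trans hbT.le⟩).trans (hφleft ht.2)
  refine ⟨u, hu, hper, ?_, fun t ht => congrArg g (hu_left ht), fun t ht => ?_⟩
  · rintro ⟨c, rfl⟩
    refine hut₀ ((hu_left ⟨ht₀.1.le, ht₀.2.le⟩).symm.trans ?_)
    exact (hu_left ⟨le_rfl, hb.le⟩).trans (hu₀.eq_of_notMem 0 (by simp))
  · rw [Function.comp_apply, huφ ⟨hb.le.trans ht.1, ht.2⟩, hφright ht.1]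
    exact (hs _ (hqρ t)).2

theorem exists_periodic_control {v₀ v₁ : ℝ → ℂ} (hg : ContDiff ℝ ∞ g)
    (hsurj : Function.Surjective g) (hc₀ : deriv g c₀ ≠ 0) (hv₀ : IsUnimodular v₀)
    (hv₁ : IsUnimodular v₁) (hpot : ∀ t, potential v₁ t = g c₀) (hb : 0 < b) (hbT : b < T)
    (hv₀₁ : EqOn v₀ v₁ (Ici b)) {ε : ℝ} (hε : 0 < ε) :
    ∃ (u : ℝ → ℝ) (V : ℝ → ℂ), ContDiff ℝ ∞ u ∧ Function.Periodic u T ∧ (¬ ∃ c, u = fun _ => c) ∧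
      IsHillSolution (g ∘ u) V ∧ phase V 0 = phase v₀ 0 ∧ phase V T = phase v₀ T ∧
      ∀ t ∈ Icc 0 T, ‖V t - v₀ t‖ < ε := by
  obtain ⟨s, ρ, hρ, hsc, hs⟩ := exists_contDiffAt_section hg hc₀
  obtain ⟨δ, hδ, hsteer⟩ := hv₁.exists_steering hbT (lt_min hε hρ)
  obtain ⟨u₀, v, hu₀, hv, hvsol, hv_init, hv_close⟩ :=
    hv₀.exists_isPerturbation_norm_phase_sub_lt hg hsurj c₀ hb (lt_min hδ hε)
  have hphase₀₁ := eqOn_phase_of_eqOn (uniqueDiffOn_Ici b) hv₀.differentiable hv₁.differentiable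
    hv₀₁
  have hvb : ‖phase v b - phase v₁ b‖ < δ := by
    rw [← hphase₀₁ self_mem_Ici]
    exact (hv_close b ⟨hb.le, le_rfl⟩).trans_le (min_le_left _ _)
  obtain ⟨w, hw, hwb, hwT, hqb, hqclose, hwclose⟩ :=
    hsteer (phase v b) hvb (hv.wronskian_eq_one b)
  have hqT := eqOn_potential_of_eqOn (uniqueDiffOn_Ici T) hw.contDiff hv₁.contDiff hwT
  obtain ⟨u, hu, hper, hnonconst, hu_left, hu_right⟩ :=
    exists_periodic_control_of_isPerturbation hu₀ hbT hsc hs hw.contDiff_potential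
      (fun t => hpot t ▸ (hqclose t).trans_le (min_le_right _ _))
      (fun t ht => (hqb ht).trans (hpot t)) (fun t ht => (hqT ht).trans (hpot t))
  have hgu : Continuous (g ∘ u) := hg.continuous.comp hu.continuous
  obtain ⟨V, hV₀, hV⟩ := exists_isHillSolution hgu 0 (phase v₀ 0)
  have hVv : EqOn (phase V) (phase v) (Icc 0 b) := hV.eqOn_phase_Icc hvsol hgu
    (hg.continuous.comp hu₀.contDiff.continuous) hu_left (hV₀.trans hv_init.symm)
  have hVw : EqOn (phase V) (phase w) (Icc b T) := hV.eqOn_phase_Icc hw.isHillSolution hgu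
    hw.contDiff_potential.continuous hu_right ((hVv ⟨hb.le, le_rfl⟩).trans hwb.symm)
  refine ⟨u, V, hu, hper, hnonconst, hV, hV₀, ?_, fun t ht => ?_⟩
  · rw [hVw ⟨hbT.le, le_rfl⟩, hphase₀₁ hbT.le]
    exact eqOn_phase_of_eqOn (uniqueDiffOn_Ici T) hw.differentiable hv₁.differentiable hwT
      self_mem_Ici
  rcases le_total t b with htb | hbt
  · rw [(Prod.mk.inj (hVv ⟨ht.1, htb⟩)).1]
    exact (norm_fst_le (phase v t - phase v₀ t)).trans_lt
      ((hv_close t ⟨ht.1, htb⟩).trans_le (min_le_right _ _))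
  · rw [(Prod.mk.inj (hVw ⟨hbt, ht.2⟩)).1, hv₀₁ hbt]
    exact (hwclose t ⟨hbt, ht.2⟩).trans_le (min_le_left _ _)

end PeriodicControl

section Target

variable {T α : ℝ} {z : ℂ × ℂ}

lemma exists_isUnimodular_potential_eq_const (k : ℝ) (hz : wedge z.1 z.2 = 1) (T : ℝ) :
    ∃ v, IsUnimodular v ∧ (∀ t, potential v t = k) ∧ phase v T = z := by
  obtain ⟨v, hvT, hv⟩ := exists_isHillSolution (q := fun _ => k) continuous_const T z
  have hwronskian : wronskian v T = 1 := by
    rw [← hvT] at hz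
    exact hz
  have hunimod := hv.isUnimodular contDiff_const hwronskian
  exact ⟨v, hunimod, fun t => hv.potential_eq (hunimod.wronskian_eq_one t), hvT⟩

lemma IsUnimodular.exists_eqOn_Ici_of_polarAngle_pos {v₁ : ℝ → ℂ} (hv₁ : IsUnimodular v₁)
    (hT : 0 < T) (hα : 0 < α) (hv₁T : v₁ T = ‖v₁ T‖ * Complex.exp (α * Complex.I)) :
    ∃ (b : ℝ) (θ : ℝ → ℝ) (v₀ : ℝ → ℂ), b ∈ Ioo 0 T ∧ Continuous θ ∧ θ 0 = 0 ∧ θ T = α ∧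
      IsUnimodular v₀ ∧ phase v₀ 0 = (1, Complex.I) ∧ EqOn v₀ v₁ (Ici b) ∧
      ∀ t, v₀ t = ‖v₀ t‖ * Complex.exp (θ t * Complex.I) := by
  obtain ⟨θ₁, hθ₁, hθ₁T, hv₁θ⟩ := exists_contDiff_polarAngle hv₁.contDiff hv₁.ne_zero hv₁T
  have hpos : ∀ᶠ b in 𝓝[<] T, 0 < θ₁ b :=
    nhdsWithin_le_nhds (hθ₁.continuous.continuousAt.eventually_const_lt (hθ₁T ▸ hα))
  obtain ⟨b, hθ₁b, hb⟩ := (hpos.and (Ioo_mem_nhdsLT hT)).exists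
  obtain ⟨θ, hθ, hθpos, hθ_left, hθ_right⟩ := exists_contDiff_deriv_pos_glue contDiff_id hθ₁
    (fun t => by simp) (hv₁.deriv_polarAngle_pos hθ₁ hv₁θ) hb.1 hθ₁b
  have hv₀ := isUnimodular_curveOfAngle hθ hθpos
  have hid := isUnimodular_curveOfAngle contDiff_id fun t => by simp
  refine ⟨b, θ, curveOfAngle θ, hb, hθ.continuous, hθ_left self_mem_Iic,
    (hθ_right hb.2.le).trans hθ₁T, hv₀, ?_, ?_,
    curveOfAngle_eq_norm_mul (hθ.differentiable (by simp))⟩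
  · rw [← phase_curveOfAngle_id]
    exact eqOn_phase_of_eqOn (uniqueDiffOn_Iic 0) hv₀.differentiable hid.differentiable
      (eqOn_curveOfAngle (uniqueDiffOn_Iic 0) hθ contDiff_id hθ_left) self_mem_Iic
  · have heq := eqOn_curveOfAngle (uniqueDiffOn_Ici b) hθ hθ₁ hθ_right
    rwa [hv₁.curveOfAngle_eq hθ₁ hv₁θ] at heq

lemma exists_continuousOn_polarAngle_of_norm_sub_lt {v w : ℝ → ℂ} {θ : ℝ → ℝ} {s : Set ℝ}
    (hv : ContinuousOn v s) (hw : ContinuousOn w s) (hθ : ContinuousOn θ s)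
    (hvθ : ∀ t ∈ s, v t = ‖v t‖ * Complex.exp (θ t * Complex.I))
    (hvw : ∀ t ∈ s, ‖w t - v t‖ < ‖v t‖) :
    ∃ ϑ : ℝ → ℝ, ContinuousOn ϑ s ∧ (∀ t ∈ s, w t = v t → ϑ t = θ t) ∧
      ∀ t ∈ s, w t = ‖w t‖ * Complex.exp (ϑ t * Complex.I) := by
  have hv₀ (t : ℝ) (ht : t ∈ s) : v t ≠ 0 := norm_pos_iff.1 ((norm_nonneg _).trans_lt (hvw t ht))
  refine ⟨fun t => θ t + (w t / v t).arg, hθ.add fun t ht => ?_, fun t ht hwv => ?_,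
    fun t ht => polarAngle_add_arg (hvθ t ht) (hv₀ t ht)⟩
  · exact ContinuousAt.comp_continuousWithinAt (f := w / v)
      (Complex.continuousAt_arg (div_mem_slitPlane_of_norm_sub_lt (hvw t ht)))
      ((hw t ht).div (hv t ht) (hv₀ t ht))
  · simp [hwv, hv₀ t ht]

theorem exists_periodic_control_polarAngle {g : ℝ → ℝ} (hg : ContDiff ℝ ∞ g)
    (hsurj : Function.Surjective g) (hT : 0 < T) (hα : 0 < α) (hz : wedge z.1 z.2 = 1)
    (hzα : z.1 = ‖z.1‖ * Complex.exp (α * Complex.I)) :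
    ∃ (u : ℝ → ℝ) (V : ℝ → ℂ) (ϑ : ℝ → ℝ), ContDiff ℝ ∞ u ∧ Function.Periodic u T ∧
      (¬ ∃ c, u = fun _ => c) ∧ IsHillSolution (g ∘ u) V ∧ phase V 0 = (1, Complex.I) ∧
      phase V T = z ∧ ContinuousOn ϑ (Icc 0 T) ∧ ϑ 0 = 0 ∧ ϑ T = α ∧
      ∀ t ∈ Icc 0 T, V t = ‖V t‖ * Complex.exp (ϑ t * Complex.I) := by
  obtain ⟨c₀, hc₀⟩ := exists_deriv_ne_zero_of_surjective (hg.differentiable (by simp)) hsurj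
  obtain ⟨v₁, hv₁, hpot, hv₁T⟩ := exists_isUnimodular_potential_eq_const (g c₀) hz T
  obtain ⟨b, θ, v₀, hb, hθ, hθ₀, hθT, hv₀, hv₀_init, hv₀₁, hv₀θ⟩ :=
    hv₁.exists_eqOn_Ici_of_polarAngle_pos hT hα ((Prod.mk.inj hv₁T).1 ▸ hzα)
  have hv₀T : phase v₀ T = z := (eqOn_phase_of_eqOn (uniqueDiffOn_Ici b) hv₀.differentiable
    hv₁.differentiable hv₀₁ hb.2.le).trans hv₁T
  have hv₀_cont := hv₀.contDiff.continuous
  obtain ⟨t₀, -, hmin⟩ := isCompact_Icc.exists_isMinOn (nonempty_Icc.2 hT.le)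
    hv₀_cont.norm.continuousOn
  obtain ⟨u, V, hu, hper, hnonconst, hV, hV₀, hVT, hVv₀⟩ := exists_periodic_control hg hsurj hc₀
    hv₀ hv₁ hpot hb.1 hb.2 hv₀₁ (norm_pos_iff.2 (hv₀.ne_zero t₀))
  have hV_cont : Continuous V := (hV.contDiff (hg.comp hu)).continuous
  obtain ⟨ϑ, hϑ, hϑθ, hVϑ⟩ := exists_continuousOn_polarAngle_of_norm_sub_lt
    hv₀_cont.continuousOn hV_cont.continuousOn hθ.continuousOn (fun t _ => hv₀θ t)
    fun t ht => (hVv₀ t ht).trans_le (hmin ht)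
  exact ⟨u, V, ϑ, hu, hper, hnonconst, hV, hV₀.trans hv₀_init, hVT.trans hv₀T, hϑ,
    (hϑθ 0 ⟨le_rfl, hT.le⟩ (Prod.mk.inj hV₀).1).trans hθ₀,
    (hϑθ T ⟨hT.le, le_rfl⟩ (Prod.mk.inj hVT).1).trans hθT, hVϑ⟩

end Target

section FundamentalMatrix

/-- The real matrix whose rows are the plane vectors `z.1` and `z.2`; applied to the phase of a
curve in the plane it is the Wronski matrix of the two coordinates. -/
noncomputable def rowMatrix (z : ℂ × ℂ) : Matrix (Fin 2) (Fin 2) ℝ :=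
  !![z.1.re, z.1.im; z.2.re, z.2.im]

lemma rowMatrix_mk (A : Matrix (Fin 2) (Fin 2) ℝ) :
    rowMatrix (⟨A 0 0, A 0 1⟩, ⟨A 1 0, A 1 1⟩) = A :=
  (Matrix.eta_fin_two A).symm

lemma det_rowMatrix (z : ℂ × ℂ) : (rowMatrix z).det = wedge z.1 z.2 := by
  rw [rowMatrix, Matrix.det_fin_two_of, wedge]

variable {q : ℝ → ℝ} {V : ℝ → ℂ}

lemma IsHillSolution.isFundMatrix (hV : IsHillSolution q V) (h₀ : phase V 0 = (1, Complex.I)) :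
    IsFundMatrix q fun t => rowMatrix (phase V t) := by
  refine ⟨by simp [h₀, rowMatrix, Matrix.one_fin_two], fun t i j => ?_⟩
  obtain ⟨hv, hv'⟩ := isHillSolution_iff.1 hV t
  fin_cases i <;> fin_cases j
  · simpa [rowMatrix, phase] using hasDerivAt_re_comp hv
  · simpa [rowMatrix, phase] using hasDerivAt_im_comp hv
  · simpa [rowMatrix, phase] using hasDerivAt_re_comp hv'
  · simpa [rowMatrix, phase] using hasDerivAt_im_comp hv'

lemma isArgLift_rowMatrix_phase {ϑ : ℝ → ℝ} (hϑ : ContinuousOn ϑ (Icc 0 (2 * π))) (hϑ₀ : ϑ 0 = 0)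
    (h : ∀ t ∈ Icc 0 (2 * π), V t = ‖V t‖ * Complex.exp (ϑ t * Complex.I)) :
    IsArgLift (fun t => rowMatrix (phase V t)) ϑ := by
  refine ⟨hϑ, hϑ₀, fun t ht => ?_⟩
  have hnorm : √((V t).re ^ 2 + (V t).im ^ 2) = ‖V t‖ := (Complex.norm_eq_sqrt_sq_add_sq _).symm
  have hre := congrArg Complex.re (h t ht)
  have him := congrArg Complex.im (h t ht)
  rw [Complex.re_ofReal_mul, Complex.exp_ofReal_mul_I_re] at hre
  rw [Complex.im_ofReal_mul, Complex.exp_ofReal_mul_I_im] at him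
  simp only [rowMatrix, phase, Matrix.of_apply, Matrix.cons_val', Matrix.cons_val_zero,
    Matrix.cons_val_one, Matrix.cons_val_fin_one, hnorm]
  exact ⟨hre, him⟩

end FundamentalMatrix

theorem stmt_13_general (g : ℝ → ℝ) (hg : ContDiff ℝ ∞ g) (hsurj : Function.Surjective g)
    (A : Matrix (Fin 2) (Fin 2) ℝ) (hA : A.det = 1) (α : ℝ) (hα : 0 < α)
    (hrow : ∃ r : ℝ, 0 < r ∧ A 0 0 = r * Real.cos α ∧ A 0 1 = r * Real.sin α) :
    ∃ u : ℝ → ℝ, ContDiff ℝ ∞ u ∧ Function.Periodic u (2 * π) ∧ (¬ ∃ c : ℝ, u = fun _ => c) ∧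
      ∃ Φ : ℝ → Matrix (Fin 2) (Fin 2) ℝ, ∃ θ : ℝ → ℝ,
        IsFundMatrix (fun t => g (u t)) Φ ∧ IsArgLift Φ θ ∧ Φ (2 * π) = A ∧ θ (2 * π) = α := by
  obtain ⟨r, hr, hcos, hsin⟩ := hrow
  set z : ℂ × ℂ := (⟨A 0 0, A 0 1⟩, ⟨A 1 0, A 1 1⟩)
  have hzA : rowMatrix z = A := rowMatrix_mk A
  have hzr : z.1 = r * Complex.exp (α * Complex.I) := by
    apply Complex.ext <;>
      simp [z, hcos, hsin, Complex.exp_ofReal_mul_I_re, Complex.exp_ofReal_mul_I_im]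
  have hzα : z.1 = ‖z.1‖ * Complex.exp (α * Complex.I) := by
    rw [hzr, norm_mul, Complex.norm_exp_ofReal_mul_I, mul_one, Complex.norm_of_nonneg hr.le]
  obtain ⟨u, V, θ, hu, hper, hnonconst, hV, hV₀, hVT, hθ, hθ₀, hθT, hVθ⟩ :=
    exists_periodic_control_polarAngle hg hsurj two_pi_pos hα
      ((det_rowMatrix z).symm.trans (hzA ▸ hA)) hzα
  exact ⟨u, hu, hper, hnonconst, _, θ, hV.isFundMatrix hV₀, isArgLift_rowMatrix_phase hθ hθ₀ hVθ,
    (congrArg rowMatrix hVT).trans hzA, hθT⟩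

/-- Proposition 3.6, matrix–winding form. For `f` smooth with `f'`
surjective and nowhere flat, every element of `G₀` — encoded by a matrix `A ∈ SL(2,ℝ)`
and a winding `α > 0` compatible with the first row of `A` — is the lifted monodromy of
`f' ∘ u` for some nonconstant smooth `2π`-periodic `u`. -/
theorem stmt_13 (f : ℝ → ℝ) (hf : ContDiff ℝ (⊤ : ℕ∞) f)
    (hsurj : Function.Surjective (deriv f)) (hnf : NowhereFlat (deriv f))
    (A : Matrix (Fin 2) (Fin 2) ℝ) (hA : A.det = 1)
    (α : ℝ) (hα : 0 < α)
    (hrow : ∃ r : ℝ, 0 < r ∧ A 0 0 = r * Real.cos α ∧ A 0 1 = r * Real.sin α) :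
    ∃ u : ℝ → ℝ, ContDiff ℝ (⊤ : ℕ∞) u ∧ Function.Periodic u (2 * π) ∧
      (¬ ∃ c : ℝ, u = fun _ => c) ∧
      ∃ Φ : ℝ → Matrix (Fin 2) (Fin 2) ℝ, ∃ θ : ℝ → ℝ,
        IsFundMatrix (fun t => deriv f (u t)) Φ ∧ IsArgLift Φ θ ∧
        Φ (2 * π) = A ∧ θ (2 * π) = α :=
  stmt_13_general _ (contDiff_infty_iff_deriv.1 hf).2 hsurj A hA α hα hrow
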